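/- If G is a finite simple graph with maximum average degree Mad(G) < 5/2, then G has an I,F-partition. -/

import Mathlib

open SimpleGraph

noncomputable def edgeCount {V : Type*} (G : SimpleGraph V) : ℕ := Nat.card G.edgeSet

noncomputable def deg {V : Type*} (G : SimpleGraph V) (v : V) : ℕ := Nat.card (G.neighborSet v)

def TwoIndependent {V : Type*} (G : SimpleGraph V) (S : Set V) : Prop :=
  ∀ u ∈ S, ∀ v ∈ S, u ≠ v → ¬ G.Adj u v ∧ ∀ w, ¬ (G.Adj u w ∧ G.Adj w v)

def IsIFPartition {V : Type*} (G : SimpleGraph V) (A B : Set V) : Prop :=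
  A ∪ B = Set.univ ∧ Disjoint A B ∧ TwoIndependent G A ∧ (G.induce B).IsAcyclic

def IsAssignment {V : Type*} (I F U : Set V) : Prop :=
  I ∪ F ∪ U = Set.univ ∧ Disjoint I F ∧ Disjoint I U ∧ Disjoint F U

noncomputable def rho {V : Type*} (G : SimpleGraph V) (I F U : Set V) (H : G.Subgraph) : ℤ :=
  (H.verts ∩ I).ncard + 4 * (H.verts ∩ F).ncard + 5 * (H.verts ∩ U).ncard
    - 4 * Nat.card H.edgeSet

noncomputable def rhoSet {V : Type*} (G : SimpleGraph V) (I F U : Set V) (S : Set V) : ℤ :=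
  (S ∩ I).ncard + 4 * (S ∩ F).ncard + 5 * (S ∩ U).ncard - 4 * edgeCount (G.induce S)

def IsCounterexample {V : Type*} [Fintype V] (G : SimpleGraph V) (I F U : Set V) : Prop :=
  IsAssignment I F U ∧
  (∀ H : G.Subgraph, H.verts.Nonempty → 0 < rho G I F U H) ∧
  ¬ ∃ A B : Set V, IsIFPartition G A B ∧ I ⊆ A ∧ F ⊆ B

def IsMinCounterexample {V : Type*} [Fintype V] (G : SimpleGraph V) (I F U : Set V) : Prop :=
  IsCounterexample G I F U ∧
  ∀ (n : ℕ) (G' : SimpleGraph (Fin n)) (I' F' U' : Set (Fin n)),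
    IsCounterexample G' I' F' U' →
    Fintype.card V + edgeCount G ≤ n + edgeCount G'

def IsThread {V : Type*} (G : SimpleGraph V) (I F U : Set V) (p : List V) : Prop :=
  p ≠ [] ∧ p.Nodup ∧ p.Chain' G.Adj ∧ (∀ v ∈ p, v ∈ U ∧ deg G v = 2) ∧
  (∀ w, w ∉ p → (∃ a ∈ p, G.Adj a w) → 3 ≤ deg G w ∨ w ∈ I ∪ F)

def BordersThread {V : Type*} (G : SimpleGraph V) (p : List V) (w : V) : Prop :=
  w ∉ p ∧ ∃ a ∈ p, G.Adj a w

def IsStarForest {V : Type*} (H : SimpleGraph V) : Prop :=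
  H.IsAcyclic ∧ ∀ a b c d : V, H.Adj a b → H.Adj b c → H.Adj c d → a = c ∨ b = d

def IsStarColoring {V : Type*} {k : ℕ} (G : SimpleGraph V) (c : V → Fin k) : Prop :=
  (∀ u v, G.Adj u v → c u ≠ c v) ∧
  ∀ i j : Fin k, IsStarForest (G.induce {v | c v = i ∨ c v = j})

def StarColorable {V : Type*} (G : SimpleGraph V) (k : ℕ) : Prop :=
  ∃ c : V → Fin k, IsStarColoring G c

def MadLt {V : Type*} (G : SimpleGraph V) (q : ℚ) : Prop :=
  ∀ H : G.Subgraph, H.verts.Nonempty →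
    (2 * (Nat.card H.edgeSet : ℚ)) / (H.verts.ncard : ℚ) < q

namespace IFP

open Finset Classical

variable {V : Type*}

/-- number of neighbours of `v` in `S` -/
noncomputable def nb (G : SimpleGraph V) (S : Finset V) (v : V) : ℤ :=
  ((S.filter (fun u => G.Adj v u)).card : ℤ)

/-- potential of a set of vertices -/
noncomputable def pot (G : SimpleGraph V) (w : V → ℤ) (S : Finset V) : ℤ :=
  ∑ v ∈ S, (w v - 2 * nb G S v)

lemma nb_eq_sum (G : SimpleGraph V) (S : Finset V) (v : V) :
    nb G S v = ∑ u ∈ S, if G.Adj v u then (1 : ℤ) else 0 := by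
  simp [nb, Finset.sum_ite]

lemma nb_nonneg (G : SimpleGraph V) (S : Finset V) (v : V) : 0 ≤ nb G S v := by
  simp [nb]

lemma nb_insert (G : SimpleGraph V) {S : Finset V} {a : V} (v : V) (h : a ∉ S) :
    nb G (insert a S) v = nb G S v + if G.Adj v a then 1 else 0 := by
  rw [nb_eq_sum, nb_eq_sum, Finset.sum_insert h]; ring

lemma nb_empty (G : SimpleGraph V) (v : V) : nb G ∅ v = 0 := by simp [nb]

lemma nb_mono (G : SimpleGraph V) {S T : Finset V} (h : S ⊆ T) (v : V) :
    nb G S v ≤ nb G T v := by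
  unfold nb
  exact_mod_cast Finset.card_le_card (Finset.filter_subset_filter _ h)

lemma nb_le_one (G : SimpleGraph V) {S : Finset V} {v : V}
    (h : ∀ p ∈ S, ∀ q ∈ S, G.Adj v p → G.Adj v q → p = q) : nb G S v ≤ 1 := by
  unfold nb
  have : (S.filter (fun u => G.Adj v u)).card ≤ 1 := by
    rw [Finset.card_le_one]
    intro a ha b hb
    simp only [Finset.mem_filter] at ha hb
    exact h a ha.1 b hb.1 ha.2 hb.2
  exact_mod_cast this

lemma nb_pos (G : SimpleGraph V) {S : Finset V} {v p : V}
    (hp : p ∈ S) (ha : G.Adj v p) : 1 ≤ nb G S v := by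
  unfold nb
  have : 0 < (S.filter (fun u => G.Adj v u)).card :=
    Finset.card_pos.2 ⟨p, by simp [hp, ha]⟩
  exact_mod_cast this

lemma nb_two (G : SimpleGraph V) {S : Finset V} {v p q : V}
    (hp : p ∈ S) (hq : q ∈ S) (hpq : p ≠ q) (ha : G.Adj v p) (hb : G.Adj v q) :
    2 ≤ nb G S v := by
  unfold nb
  have h2 : ({p, q} : Finset V) ⊆ S.filter (fun u => G.Adj v u) := by
    intro x hx
    simp only [Finset.mem_insert, Finset.mem_singleton] at hx
    rcases hx with rfl | rfl <;> simp [*]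
  have := Finset.card_le_card h2
  rw [Finset.card_pair hpq] at this
  exact_mod_cast this

lemma pot_empty (G : SimpleGraph V) (w : V → ℤ) : pot G w ∅ = 0 := by simp [pot]

lemma pot_insert (G : SimpleGraph V) (w : V → ℤ) {S : Finset V} {v : V} (h : v ∉ S) :
    pot G w (insert v S) = pot G w S + w v - 4 * nb G S v := by
  unfold pot
  rw [Finset.sum_insert h]
  have h1 : ∀ u ∈ S, w u - 2 * nb G (insert v S) u
      = (w u - 2 * nb G S u) - 2 * (if G.Adj v u then (1 : ℤ) else 0) := by
    intro u _
    rw [nb_insert G u h, G.adj_comm]; ring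
  rw [Finset.sum_congr rfl h1, Finset.sum_sub_distrib, ← Finset.mul_sum, ← nb_eq_sum,
    nb_insert G v h]
  simp
  ring

lemma pot_singleton (G : SimpleGraph V) (w : V → ℤ) (v : V) : pot G w {v} = w v := by
  have := pot_insert G w (S := ∅) (v := v) (by simp)
  simpa [pot_empty, nb_empty] using this

lemma pot_union (G : SimpleGraph V) (w : V → ℤ) {A B : Finset V} (h : Disjoint A B) :
    pot G w (A ∪ B) = pot G w A + pot G w B - 4 * ∑ b ∈ B, nb G A b := by
  induction B using Finset.induction_on with
  | empty => simp [pot_empty]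
  | insert b B hb ih =>
    have hd : Disjoint A B := h.mono_right (Finset.subset_insert _ _)
    have hbA : b ∉ A := by
      intro hh
      exact (Finset.disjoint_left.1 h hh) (Finset.mem_insert_self _ _)
    rw [Finset.union_insert, pot_insert G w (by simp [hb, hbA]), ih hd, pot_insert G w hb,
      Finset.sum_insert hb]
    have : nb G (A ∪ B) b = nb G A b + nb G B b := by
      rw [nb_eq_sum, nb_eq_sum, nb_eq_sum, Finset.sum_union hd]
    rw [this]; ring

lemma pot_congr (G G' : SimpleGraph V) (w w' : V → ℤ) {S : Finset V}
    (hG : ∀ u ∈ S, ∀ v ∈ S, (G.Adj u v ↔ G'.Adj u v)) (hw : ∀ u ∈ S, w u = w' u) :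
    pot G w S = pot G' w' S := by
  unfold pot
  refine Finset.sum_congr rfl fun u hu => ?_
  rw [hw u hu]
  have : nb G S u = nb G' S u := by
    unfold nb
    congr 2
    exact Finset.filter_congr fun v hv => hG u hu v hv
  rw [this]

lemma pot_weight (G : SimpleGraph V) (w w' : V → ℤ) (S : Finset V) :
    pot G w' S = pot G w S - ∑ v ∈ S, (w v - w' v) := by
  unfold pot
  rw [← Finset.sum_sub_distrib]
  exact Finset.sum_congr rfl fun u _ => by ring

/-- the graph with an extra edge -/
def addE (G : SimpleGraph V) (c y : V) : SimpleGraph V := G ⊔ SimpleGraph.edge c y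

lemma addE_adj (G : SimpleGraph V) {c y : V} (h : c ≠ y) (a b : V) :
    (addE G c y).Adj a b ↔ G.Adj a b ∨ (a = c ∧ b = y) ∨ (a = y ∧ b = c) := by
  unfold addE
  rw [SimpleGraph.sup_adj, SimpleGraph.edge_adj]
  constructor
  · rintro (h | ⟨h, -⟩)
    · exact Or.inl h
    · tauto
  · rintro (h1 | ⟨rfl, rfl⟩ | ⟨rfl, rfl⟩)
    · exact Or.inl h1
    · exact Or.inr ⟨by simp, h⟩
    · exact Or.inr ⟨by simp, h.symm⟩

lemma pot_addE_not (G : SimpleGraph V) (w : V → ℤ) {c y : V} (h : c ≠ y) {T : Finset V}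
    (hT : ¬ (c ∈ T ∧ y ∈ T)) : pot (addE G c y) w T = pot G w T := by
  apply pot_congr
  · intro u hu v hv
    rw [addE_adj G h]
    constructor
    · rintro (h1 | ⟨rfl, rfl⟩ | ⟨rfl, rfl⟩)
      · exact h1
      · exact absurd ⟨hu, hv⟩ hT
      · exact absurd ⟨hv, hu⟩ hT
    · exact Or.inl
  · intros; rfl

lemma pot_addE (G : SimpleGraph V) (w : V → ℤ) {c y : V} (h : c ≠ y) (hn : ¬ G.Adj c y)
    {T : Finset V} (hc : c ∈ T) (hy : y ∈ T) : pot (addE G c y) w T = pot G w T - 4 := by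
  obtain ⟨S, hS, rfl⟩ : ∃ S, y ∉ S ∧ T = insert y S :=
    ⟨T.erase y, by simp, (Finset.insert_erase hy).symm⟩
  rw [pot_insert _ _ hS, pot_insert _ _ hS, pot_addE_not G w h (by tauto)]
  have hcS : c ∈ S := by
    rcases Finset.mem_insert.1 hc with h1 | h1
    · exact absurd h1 h
    · exact h1
  have : nb (addE G c y) S y = nb G S y + 1 := by
    obtain ⟨S', hS', rfl⟩ : ∃ S', c ∉ S' ∧ S = insert c S' :=
      ⟨S.erase c, by simp, (Finset.insert_erase hcS).symm⟩
    rw [nb_insert _ _ hS', nb_insert _ _ hS']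
    have h1 : nb (addE G c y) S' y = nb G S' y := by
      unfold nb
      congr 2
      apply Finset.filter_congr
      intro v hv
      rw [addE_adj G h]
      constructor
      · rintro (h1 | ⟨h1, _⟩ | ⟨_, rfl⟩)
        · exact h1
        · exact absurd h1.symm h
        · exact absurd hv hS'
      · exact Or.inl
    have h2 : ¬ G.Adj y c := fun hh => hn hh.symm
    rw [h1, if_pos ((addE_adj G h y c).2 (by simp)), if_neg h2]
    ring
  rw [this]; ring

/-- forests, by counting: every nonempty subset spans fewer edges than vertices -/
def Forest (G : SimpleGraph V) (B : Finset V) : Prop :=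
  ∀ S ⊆ B, S.Nonempty → 0 < pot G (fun _ => 4) S

lemma Forest.mono {G : SimpleGraph V} {A B : Finset V} (h : Forest G B) (hAB : A ⊆ B) :
    Forest G A := fun S hS hn => h S (hS.trans hAB) hn

lemma Forest.leaf {G : SimpleGraph V} {B : Finset V} (h : Forest G B) {v : V} (hv : v ∉ B)
    (hl : ∀ p ∈ B, ∀ q ∈ B, G.Adj v p → G.Adj v q → p = q) : Forest G (insert v B) := by
  intro S hS hn
  by_cases hvS : v ∈ S
  · obtain ⟨S', hS', rfl⟩ : ∃ S', v ∉ S' ∧ S = insert v S' :=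
      ⟨S.erase v, by simp, (Finset.insert_erase hvS).symm⟩
    have hsub : S' ⊆ B := by
      intro x hx
      have := hS (Finset.mem_insert_of_mem hx)
      rcases Finset.mem_insert.1 this with rfl | h1
      · exact absurd hx hS'
      · exact h1
    rw [pot_insert _ _ hS']
    rcases S'.eq_empty_or_nonempty with rfl | hne
    · simp [pot_empty, nb_empty]
    · have h1 := h S' hsub hne
      have h2 : nb G S' v ≤ 1 := nb_le_one G fun p hp q hq => hl p (hsub hp) q (hsub hq)
      linarith
  · apply h S _ hn
    intro x hx
    rcases Finset.mem_insert.1 (hS hx) with rfl | h1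
    · exact absurd hx hvS
    · exact h1

lemma Forest.subdiv {G : SimpleGraph V} {B : Finset V} {c y v : V} (hcy : c ≠ y)
    (hn : ¬ G.Adj c y)
    (h : Forest (addE G c y) B) (hv : v ∉ B)
    (hl : ∀ p ∈ B, G.Adj v p → p = c ∨ p = y) : Forest G (insert v B) := by
  have h0 : Forest G B := by
    intro S hS hne
    have := h S hS hne
    by_cases hb : c ∈ S ∧ y ∈ S
    · rw [pot_addE G _ hcy hn hb.1 hb.2] at this; linarith
    · rwa [pot_addE_not G _ hcy hb] at this
  intro S hS hne
  by_cases hvS : v ∈ S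
  · obtain ⟨S', hS', rfl⟩ : ∃ S', v ∉ S' ∧ S = insert v S' :=
      ⟨S.erase v, by simp, (Finset.insert_erase hvS).symm⟩
    have hsub : S' ⊆ B := by
      intro x hx
      have := hS (Finset.mem_insert_of_mem hx)
      rcases Finset.mem_insert.1 this with rfl | h1
      · exact absurd hx hS'
      · exact h1
    rw [pot_insert _ _ hS']
    rcases S'.eq_empty_or_nonempty with rfl | hne'
    · simp [pot_empty, nb_empty]
    · by_cases hb : c ∈ S' ∧ y ∈ S'
      · have h1 := h S' hsub hne'
        rw [pot_addE G _ hcy hn hb.1 hb.2] at h1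
        have h2 : nb G S' v ≤ 2 := by
          unfold nb
          have : S'.filter (fun u => G.Adj v u) ⊆ {c, y} := by
            intro x hx
            simp only [Finset.mem_filter] at hx
            simpa using hl x (hsub hx.1) hx.2
          have := (Finset.card_le_card this).trans Finset.card_le_two
          exact_mod_cast this
        linarith
      · have h1 := h0 S' hsub hne'
        have h2 : nb G S' v ≤ 1 := nb_le_one G fun p hp q hq hvp hvq => by
          rcases hl p (hsub hp) hvp with rfl | rfl <;> rcases hl q (hsub hq) hvq with rfl | rfl
          · rfl
          · exact absurd ⟨hp, hq⟩ hb
          · exact absurd ⟨hq, hp⟩ hb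
          · rfl
        linarith
  · apply h0 S _ hne
    intro x hx
    rcases Finset.mem_insert.1 (hS hx) with rfl | h1
    · exact absurd hx hvS
    · exact h1

lemma Forest.congr {G G' : SimpleGraph V} {B : Finset V} (h : Forest G B)
    (hG : ∀ u ∈ B, ∀ v ∈ B, (G.Adj u v ↔ G'.Adj u v)) : Forest G' B := by
  intro S hS hne
  rw [← pot_congr G G' (fun _ => 4) (fun _ => 4)
    (fun u hu v hv => hG u (hS hu) v (hS hv)) (fun _ _ => rfl)]
  exact h S hS hne

/-- a colouring of `G[W]` with weights `w` (weight `≤ 4`: in the forest; weight `≤ 2`: in the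
forest, and all neighbours as well) -/
structure Col (G : SimpleGraph V) (w : V → ℤ) (W I : Finset V) : Prop where
  sub : I ⊆ W
  typ : ∀ v ∈ I, 5 ≤ w v
  adjT : ∀ v ∈ I, ∀ u ∈ W, G.Adj v u → 3 ≤ w u
  ind : ∀ u ∈ I, ∀ v ∈ I, ¬ G.Adj u v
  dist : ∀ x ∈ W, ∀ u ∈ I, ∀ v ∈ I, G.Adj x u → G.Adj x v → u = v
  forest : Forest G (W \ I)

lemma Col.weight {G : SimpleGraph V} {w w' : V → ℤ} {W I : Finset V} (h : Col G w' W I)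
    (hw : ∀ v ∈ W, w' v ≤ w v) : Col G w W I where
  sub := h.sub
  typ v hv := (h.typ v hv).trans (hw v (h.sub hv))
  adjT v hv u hu ha := (h.adjT v hv u hu ha).trans (hw u hu)
  ind := h.ind
  dist := h.dist
  forest := h.forest

lemma Col.congr {G G' : SimpleGraph V} {w : V → ℤ} {W I : Finset V} (h : Col G w W I)
    (hG : ∀ u ∈ W, ∀ v ∈ W, (G.Adj u v ↔ G'.Adj u v)) : Col G' w W I where
  sub := h.sub
  typ := h.typ
  adjT v hv u hu ha := h.adjT v hv u hu ((hG v (h.sub hv) u hu).2 ha)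
  ind u hu v hv ha := h.ind u hu v hv ((hG u (h.sub hu) v (h.sub hv)).2 ha)
  dist x hx u hu v hv h1 h2 := h.dist x hx u hu v hv ((hG x hx u (h.sub hu)).2 h1)
    ((hG x hx v (h.sub hv)).2 h2)
  forest := h.forest.congr fun u hu v hv =>
    hG u (Finset.sdiff_subset hu) v (Finset.sdiff_subset hv)

lemma Col.restrict {G : SimpleGraph V} {w : V → ℤ} {W W' I : Finset V} (h : Col G w W I)
    (hW : W' ⊆ W) : Col G w W' (I ∩ W') where
  sub := Finset.inter_subset_right
  typ v hv := h.typ v (Finset.inter_subset_left hv)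
  adjT v hv u hu ha := h.adjT v (Finset.inter_subset_left hv) u (hW hu) ha
  ind u hu v hv := h.ind u (Finset.inter_subset_left hu) v (Finset.inter_subset_left hv)
  dist x hx u hu v hv := h.dist x (hW hx) u (Finset.inter_subset_left hu) v
    (Finset.inter_subset_left hv)
  forest := h.forest.mono (by
    intro x hx
    simp only [Finset.mem_sdiff, Finset.mem_inter] at hx ⊢
    exact ⟨hW hx.1, fun hh => hx.2 ⟨hh, hx.1⟩⟩)

/-- add a vertex to the forest -/
lemma Col.addF {G : SimpleGraph V} {w : V → ℤ} {W I : Finset V} (h : Col G w W I) {v : V}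
    (hv : v ∉ W)
    (h1 : ∀ p ∈ W, ∀ q ∈ W, p ∉ I → q ∉ I → G.Adj v p → G.Adj v q → p = q)
    (h2 : ∀ p ∈ I, ∀ q ∈ I, G.Adj v p → G.Adj v q → p = q)
    (h3 : ∀ p ∈ I, G.Adj v p → 3 ≤ w v) : Col G w (insert v W) I where
  sub := h.sub.trans (Finset.subset_insert _ _)
  typ := h.typ
  adjT a ha u hu hadj := by
    rcases Finset.mem_insert.1 hu with rfl | hu
    · exact h3 a ha hadj.symm
    · exact h.adjT a ha u hu hadj
  ind := h.ind
  dist x hx a ha b hb hxa hxb := by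
    rcases Finset.mem_insert.1 hx with rfl | hx
    · exact h2 a ha b hb hxa hxb
    · exact h.dist x hx a ha b hb hxa hxb
  forest := by
    have hvI : v ∉ I := fun hh => hv (h.sub hh)
    rw [Finset.insert_sdiff_of_notMem _ hvI]
    refine h.forest.leaf (by simp [hv]) ?_
    intro p hp q hq
    simp only [Finset.mem_sdiff] at hp hq
    exact h1 p hp.1 q hq.1 hp.2 hq.2

/-- add a vertex to the independent set -/
lemma Col.addI {G : SimpleGraph V} {w : V → ℤ} {W I : Finset V} (h : Col G w W I) {v : V}
    (hv : v ∉ W) (h0 : 5 ≤ w v)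
    (h1 : ∀ p ∈ W, G.Adj v p → p ∉ I ∧ 3 ≤ w p ∧ ∀ q ∈ I, ¬ G.Adj p q) :
    Col G w (insert v W) (insert v I) where
  sub := Finset.insert_subset_insert _ h.sub
  typ a ha := by
    rcases Finset.mem_insert.1 ha with ha1 | ha1
    · rw [ha1]; exact h0
    · exact h.typ a ha1
  adjT a ha u hu hadj := by
    rcases Finset.mem_insert.1 ha with ha1 | ha1
    · rcases Finset.mem_insert.1 hu with hu1 | hu1
      · rw [ha1, hu1] at hadj; exact absurd hadj (G.loopless.irrefl _)
      · rw [ha1] at hadj; exact (h1 u hu1 hadj).2.1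
    · rcases Finset.mem_insert.1 hu with hu1 | hu1
      · rw [hu1]; linarith
      · exact h.adjT a ha1 u hu1 hadj
  ind a ha b hb hadj := by
    rcases Finset.mem_insert.1 ha with ha1 | ha1
    · rw [ha1] at hadj
      rcases Finset.mem_insert.1 hb with hb1 | hb1
      · rw [hb1] at hadj; exact absurd hadj (G.loopless.irrefl _)
      · exact (h1 b (h.sub hb1) hadj).1 hb1
    · rcases Finset.mem_insert.1 hb with hb1 | hb1
      · rw [hb1] at hadj; exact (h1 a (h.sub ha1) hadj.symm).1 ha1
      · exact h.ind a ha1 b hb1 hadj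
  dist x hx a ha b hb hxa hxb := by
    rcases Finset.mem_insert.1 ha with ha1 | ha1
    · rcases Finset.mem_insert.1 hb with hb1 | hb1
      · rw [ha1, hb1]
      · rcases Finset.mem_insert.1 hx with hx1 | hx1
        · rw [hx1, ha1] at hxa; exact absurd hxa (G.loopless.irrefl _)
        · rw [ha1] at hxa; exact absurd hxb ((h1 x hx1 hxa.symm).2.2 b hb1)
    · rcases Finset.mem_insert.1 hb with hb1 | hb1
      · rcases Finset.mem_insert.1 hx with hx1 | hx1
        · rw [hx1, hb1] at hxb; exact absurd hxb (G.loopless.irrefl _)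
        · rw [hb1] at hxb; exact absurd hxa ((h1 x hx1 hxb.symm).2.2 a ha1)
      · rcases Finset.mem_insert.1 hx with hx1 | hx1
        · rw [hx1] at hxa; exact absurd ha1 (h1 a (h.sub ha1) hxa).1
        · exact h.dist x hx1 a ha1 b hb1 hxa hxb
  forest := h.forest.mono (by
    intro x hx
    simp only [Finset.mem_sdiff, Finset.mem_insert, not_or] at hx ⊢
    exact ⟨hx.1.resolve_left hx.2.1, hx.2.2⟩)

/-- subdivide an edge of the forest -/
lemma Col.subdiv {G : SimpleGraph V} {w : V → ℤ} {W I : Finset V} {c y v : V}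
    (hcy : c ≠ y) (hn : ¬ G.Adj c y) (h : Col (addE G c y) w W I) (hv : v ∉ W)
    (hc : c ∉ I) (hy : y ∉ I)
    (hl : ∀ p ∈ W, G.Adj v p → p = c ∨ p = y) : Col G w (insert v W) I where
  sub := h.sub.trans (Finset.subset_insert _ _)
  typ := h.typ
  adjT a ha u hu hadj := by
    rcases Finset.mem_insert.1 hu with rfl | hu
    · rcases hl a (h.sub ha) hadj.symm with rfl | rfl
      · exact absurd ha hc
      · exact absurd ha hy
    · exact h.adjT a ha u hu ((addE_adj G hcy _ _).2 (Or.inl hadj))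
  ind a ha b hb hadj := h.ind a ha b hb ((addE_adj G hcy _ _).2 (Or.inl hadj))
  dist x hx a ha b hb hxa hxb := by
    rcases Finset.mem_insert.1 hx with rfl | hx
    · rcases hl a (h.sub ha) hxa with rfl | rfl
      · exact absurd ha hc
      · exact absurd ha hy
    · exact h.dist x hx a ha b hb ((addE_adj G hcy _ _).2 (Or.inl hxa))
        ((addE_adj G hcy _ _).2 (Or.inl hxb))
  forest := by
    have hvI : v ∉ I := fun hh => hv (h.sub hh)
    rw [Finset.insert_sdiff_of_notMem _ hvI]
    refine h.forest.subdiv hcy hn (by simp [hv]) ?_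
    intro p hp
    simp only [Finset.mem_sdiff] at hp
    exact hl p hp.1

/-- admissible weights: every nonempty subset has positive potential -/
def Adm (G : SimpleGraph V) (w : V → ℤ) (W : Finset V) : Prop :=
  (∀ v, w v ≤ 5) ∧ ∀ T ⊆ W, T.Nonempty → 1 ≤ pot G w T

/-- minimal counterexample -/
structure MC (G : SimpleGraph V) (w : V → ℤ) (W : Finset V) : Prop where
  adm : Adm G w W
  nocol : ∀ I, ¬ Col G w W I
  ih : ∀ (G' : SimpleGraph V) (w' : V → ℤ) (W' : Finset V), W'.card < W.card → Adm G' w' W' →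
    ∃ I, Col G' w' W' I

lemma Adm.mono {G : SimpleGraph V} {w : V → ℤ} {W W' : Finset V} (h : Adm G w W) (hs : W' ⊆ W) :
    Adm G w W' := ⟨h.1, fun T hT => h.2 T (hT.trans hs)⟩

/-- cap the weight of a vertex -/
noncomputable def cap (w : V → ℤ) (y : V) (k : ℤ) : V → ℤ := Function.update w y (min (w y) k)

lemma cap_self (w : V → ℤ) (y : V) (k : ℤ) : cap w y k y = min (w y) k := by simp [cap]

lemma cap_ne (w : V → ℤ) {y x : V} (k : ℤ) (h : x ≠ y) : cap w y k x = w x := by simp [cap, h]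

lemma cap_le (w : V → ℤ) (y : V) (k : ℤ) (x : V) : cap w y k x ≤ w x := by
  by_cases h : x = y
  · subst h; rw [cap_self]; exact min_le_left _ _
  · rw [cap_ne w k h]

lemma pot_cap_not (G : SimpleGraph V) (w : V → ℤ) {y : V} (k : ℤ) {T : Finset V} (h : y ∉ T) :
    pot G (cap w y k) T = pot G w T := by
  apply pot_congr
  · intros; rfl
  · intro u hu
    exact cap_ne w k (by rintro rfl; exact h hu)

lemma pot_cap (G : SimpleGraph V) (w : V → ℤ) {y : V} (k : ℤ) (T : Finset V)
    (hw : w y ≤ 5) (hk : k ≤ 5) :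
    pot G w T - (5 - k) ≤ pot G (cap w y k) T := by
  by_cases h : y ∈ T
  · rw [pot_weight G w (cap w y k) T]
    have : ∑ v ∈ T, (w v - cap w y k v) = w y - min (w y) k := by
      rw [Finset.sum_eq_single y]
      · rw [cap_self]
      · intro b _ hb; rw [cap_ne w k hb]; ring
      · intro hh; exact absurd h hh
    rw [this]
    rcases min_cases (w y) k with h1 | h1 <;> linarith
  · rw [pot_cap_not G w k h]; linarith

lemma Col.uncap {G : SimpleGraph V} {w : V → ℤ} {y : V} {k : ℤ} {W I : Finset V}
    (h : Col G (cap w y k) W I) : Col G w W I := h.weight fun v _ => cap_le w y k v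

lemma Col.cap_notMem {G : SimpleGraph V} {w : V → ℤ} {y : V} {k : ℤ} {W I : Finset V}
    (h : Col G (cap w y k) W I) (hk : k ≤ 4) : y ∉ I := by
  intro hy
  have h1 := h.typ y hy
  rw [cap_self] at h1
  have := min_le_right (w y) k
  linarith

lemma Col.cap_clean {G : SimpleGraph V} {w : V → ℤ} {y : V} {W I : Finset V}
    (h : Col G (cap w y 2) W I) (hy : y ∈ W) : ∀ u ∈ I, ¬ G.Adj y u := by
  intro u hu ha
  have h1 := h.adjT u hu y hy ha.symm
  rw [cap_self] at h1
  have := min_le_right (w y) 2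
  linarith

/-- union of two colourings with at most one edge in between -/
lemma Col.union {G : SimpleGraph V} {w : V → ℤ} {X Y I J : Finset V} {x0 y0 : V}
    (hX : Col G w X I) (hY : Col G w Y J) (hd : Disjoint X Y)
    (he : ∀ x ∈ X, ∀ y ∈ Y, G.Adj x y → x = x0 ∧ y = y0)
    (h1 : G.Adj x0 y0 → x0 ∈ I → y0 ∉ J ∧ 3 ≤ w y0 ∧ ∀ u ∈ J, ¬ G.Adj y0 u)
    (h2 : G.Adj x0 y0 → y0 ∈ J → x0 ∉ I ∧ 3 ≤ w x0 ∧ ∀ u ∈ I, ¬ G.Adj x0 u) :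
    Col G w (X ∪ Y) (I ∪ J) where
  sub := Finset.union_subset_union hX.sub hY.sub
  typ v hv := by
    rcases Finset.mem_union.1 hv with hv | hv
    · exact hX.typ v hv
    · exact hY.typ v hv
  adjT v hv u hu ha := by
    rcases Finset.mem_union.1 hv with hv | hv <;> rcases Finset.mem_union.1 hu with hu | hu
    · exact hX.adjT v hv u hu ha
    · obtain ⟨rfl, rfl⟩ := he v (hX.sub hv) u hu ha
      exact (h1 ha hv).2.1
    · obtain ⟨rfl, rfl⟩ := he u hu v (hY.sub hv) ha.symm
      exact (h2 ha.symm hv).2.1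
    · exact hY.adjT v hv u hu ha
  ind v hv u hu ha := by
    rcases Finset.mem_union.1 hv with hv | hv <;> rcases Finset.mem_union.1 hu with hu | hu
    · exact hX.ind v hv u hu ha
    · obtain ⟨rfl, rfl⟩ := he v (hX.sub hv) u (hY.sub hu) ha
      exact (h1 ha hv).1 hu
    · obtain ⟨rfl, rfl⟩ := he u (hX.sub hu) v (hY.sub hv) ha.symm
      exact (h2 ha.symm hv).1 hu
    · exact hY.ind v hv u hu ha
  dist x hx u hu v hv hxu hxv := by
    rcases Finset.mem_union.1 hx with hx | hx <;> rcases Finset.mem_union.1 hu with hu | hu <;>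
      rcases Finset.mem_union.1 hv with hv | hv
    · exact hX.dist x hx u hu v hv hxu hxv
    · obtain ⟨rfl, rfl⟩ := he x hx v (hY.sub hv) hxv
      exact absurd hxu ((h2 hxv hv).2.2 u hu)
    · obtain ⟨rfl, rfl⟩ := he x hx u (hY.sub hu) hxu
      exact absurd hxv ((h2 hxu hu).2.2 v hv)
    · rw [(he x hx v (hY.sub hv) hxv).2, (he x hx u (hY.sub hu) hxu).2]
    · rw [(he u (hX.sub hu) x hx hxu.symm).1, (he v (hX.sub hv) x hx hxv.symm).1]
    · obtain ⟨rfl, rfl⟩ := he u (hX.sub hu) x hx hxu.symm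
      exact absurd hxv ((h1 hxu.symm hu).2.2 v hv)
    · obtain ⟨rfl, rfl⟩ := he v (hX.sub hv) x hx hxv.symm
      exact absurd hxu ((h1 hxv.symm hv).2.2 u hu)
    · exact hY.dist x hx u hu v hv hxu hxv
  forest := by
    have dv : ∀ T : Finset V, (4 : ℤ) ∣ pot G (fun _ => 4) T := by
      intro T
      induction T using Finset.induction_on with
      | empty => simp [pot_empty]
      | insert a T ha ih =>
        rw [pot_insert _ _ ha]
        obtain ⟨k, hk⟩ := ih
        exact ⟨k + 1 - nb G T a, by rw [hk]; ring⟩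
    intro R hR hne
    have e : R = (R ∩ X) ∪ (R ∩ Y) := by
      rw [← Finset.inter_union_distrib_left]
      refine (Finset.inter_eq_left.2 ?_).symm
      exact hR.trans Finset.sdiff_subset
    have hdis : Disjoint (R ∩ X) (R ∩ Y) :=
      hd.mono Finset.inter_subset_right Finset.inter_subset_right
    have hsX : R ∩ X ⊆ X \ I := by
      intro z hz
      have := hR (Finset.mem_inter.1 hz).1
      simp only [Finset.mem_sdiff, Finset.mem_union, not_or] at this
      exact Finset.mem_sdiff.2 ⟨(Finset.mem_inter.1 hz).2, this.2.1⟩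
    have hsY : R ∩ Y ⊆ Y \ J := by
      intro z hz
      have := hR (Finset.mem_inter.1 hz).1
      simp only [Finset.mem_sdiff, Finset.mem_union, not_or] at this
      exact Finset.mem_sdiff.2 ⟨(Finset.mem_inter.1 hz).2, this.2.2⟩
    rcases (R ∩ X).eq_empty_or_nonempty with hX0 | hX0
    · rw [hX0, Finset.empty_union] at e
      rw [e] at hne ⊢
      exact hY.forest _ hsY hne
    rcases (R ∩ Y).eq_empty_or_nonempty with hY0 | hY0
    · rw [hY0, Finset.union_empty] at e
      rw [e] at hne ⊢
      exact hX.forest _ hsX hne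
    rw [e, pot_union _ _ hdis]
    have p1 := hX.forest _ hsX hX0
    have p2 := hY.forest _ hsY hY0
    have p3 : ∑ b ∈ R ∩ Y, nb G (R ∩ X) b ≤ 1 := by
      have : ∀ b ∈ R ∩ Y, nb G (R ∩ X) b ≤ if b = y0 then 1 else 0 := by
        intro b hb
        split_ifs with hby
        · apply nb_le_one
          intro p hp q hq hbp hbq
          rw [(he p (Finset.mem_inter.1 hp).2 b (Finset.mem_inter.1 hb).2 hbp.symm).1,
            (he q (Finset.mem_inter.1 hq).2 b (Finset.mem_inter.1 hb).2 hbq.symm).1]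
        · unfold nb
          rw [Finset.filter_eq_empty_iff.2]
          · simp
          · intro p hp hbp
            exact hby (he p (Finset.mem_inter.1 hp).2 b (Finset.mem_inter.1 hb).2 hbp.symm).2
      refine (Finset.sum_le_sum this).trans ?_
      rw [Finset.sum_ite_eq']
      split_ifs <;> norm_num
    obtain ⟨k1, hk1⟩ := dv (R ∩ X)
    obtain ⟨k2, hk2⟩ := dv (R ∩ Y)
    omega

lemma MC.card_two {G : SimpleGraph V} {w : V → ℤ} {W : Finset V} (h : MC G w W) :
    2 ≤ W.card := by
  by_contra hlt
  refine h.nocol ∅ ⟨by simp, by simp, by simp, by simp, by simp, ?_⟩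
  intro S hS hne
  obtain ⟨x, hx⟩ := hne
  have : S = {x} := by
    apply Finset.eq_singleton_iff_unique_mem.2 ⟨hx, ?_⟩
    intro z hz
    have : W.card ≤ 1 := by omega
    exact Finset.card_le_one.1 this z (Finset.sdiff_subset (hS hz)) x (Finset.sdiff_subset (hS hx))
  rw [this, pot_singleton]; norm_num

lemma MC.cut_aux {G : SimpleGraph V} {w : V → ℤ} {X Y : Finset V} {x0 y0 : V}
    (h : MC G w (X ∪ Y)) (hd : Disjoint X Y) (hX : X.Nonempty) (hY : Y.Nonempty)
    (he : ∀ x ∈ X, ∀ y ∈ Y, G.Adj x y → x = x0 ∧ y = y0) (hx0 : x0 ∈ X) (hy0 : y0 ∈ Y)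
    (hB : G.Adj x0 y0 → ∀ B ⊆ Y, y0 ∈ B → 4 ≤ pot G w B) : False := by
  have cX : X.card < (X ∪ Y).card := by
    rw [Finset.card_union_of_disjoint hd]; have := hY.card_pos; omega
  have cY : Y.card < (X ∪ Y).card := by
    rw [Finset.card_union_of_disjoint hd]; have := hX.card_pos; omega
  by_cases ha : G.Adj x0 y0
  · obtain ⟨I, hI⟩ := h.ih G w X cX (h.adm.mono Finset.subset_union_left)
    obtain ⟨J, hJ⟩ := h.ih G (cap w y0 2) Y cY ⟨fun v => (cap_le _ _ _ _).trans (h.adm.1 v), by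
      intro T hT hne
      by_cases hy : y0 ∈ T
      · have := hB ha T hT hy
        have := pot_cap G w (y := y0) 2 T (h.adm.1 _) (by norm_num)
        linarith
      · rw [pot_cap_not G w 2 hy]
        exact h.adm.2 T (hT.trans Finset.subset_union_right) hne⟩
    refine h.nocol _ (hI.union hJ.uncap hd he ?_ ?_)
    · intro _ _
      refine ⟨hJ.cap_notMem (by norm_num), ?_, hJ.cap_clean hy0⟩
      have := hB ha {y0} (by simpa using hy0) (by simp)
      rw [pot_singleton] at this
      linarith
    · intro _ hy
      exact absurd hy (hJ.cap_notMem (by norm_num))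
  · obtain ⟨I, hI⟩ := h.ih G w X cX (h.adm.mono Finset.subset_union_left)
    obtain ⟨J, hJ⟩ := h.ih G w Y cY (h.adm.mono Finset.subset_union_right)
    exact h.nocol _ (hI.union hJ hd he (fun h _ => absurd h ha) (fun h _ => absurd h ha))

lemma MC.cut {G : SimpleGraph V} {w : V → ℤ} {W X Y : Finset V} {x0 y0 : V}
    (h : MC G w W) (hW : W = X ∪ Y) (hd : Disjoint X Y)
    (hx0 : x0 ∈ X) (hy0 : y0 ∈ Y)
    (he : ∀ x ∈ X, ∀ y ∈ Y, G.Adj x y → x = x0 ∧ y = y0) : False := by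
  subst hW
  have hX : X.Nonempty := ⟨_, hx0⟩
  have hY : Y.Nonempty := ⟨_, hy0⟩
  have hadd : G.Adj x0 y0 → ∀ A ⊆ X, x0 ∈ A → ∀ B ⊆ Y, y0 ∈ B → 5 ≤ pot G w A + pot G w B := by
    intro ha A hA hxA B hB hyB
    have h1 := h.adm.2 (A ∪ B) (Finset.union_subset_union hA hB) ⟨x0, by simp [hxA]⟩
    rw [pot_union G w (hd.mono hA hB)] at h1
    have : 1 ≤ ∑ b ∈ B, nb G A b := by
      refine le_trans ?_ (Finset.single_le_sum (fun i _ => nb_nonneg G A i) hyB)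
      exact nb_pos G hxA ha.symm
    linarith
  by_cases hA1 : ∃ A ⊆ X, x0 ∈ A ∧ pot G w A ≤ 1
  · obtain ⟨A, hA, hxA, hpA⟩ := hA1
    apply h.cut_aux hd hX hY he hx0 hy0
    intro ha B hB hyB
    have := hadd ha A hA hxA B hB hyB
    linarith
  by_cases hB1 : ∃ B ⊆ Y, y0 ∈ B ∧ pot G w B ≤ 1
  · obtain ⟨B, hB, hyB, hpB⟩ := hB1
    rw [Finset.union_comm] at h
    refine h.cut_aux (x0 := y0) (y0 := x0) hd.symm hY hX ?_ hy0 hx0 ?_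
    · intro x hx y hy ha
      exact (he y hy x hx ha.symm).symm
    · intro ha A hA hxA
      have := hadd ha.symm A hA hxA B hB hyB
      linarith
  push Not at hA1 hB1
  have cX : X.card < (X ∪ Y).card := by
    rw [Finset.card_union_of_disjoint hd]; have := hY.card_pos; omega
  have cY : Y.card < (X ∪ Y).card := by
    rw [Finset.card_union_of_disjoint hd]; have := hX.card_pos; omega
  obtain ⟨I, hI⟩ := h.ih G (cap w x0 4) X cX ⟨fun v => (cap_le _ _ _ _).trans (h.adm.1 v), by
      intro T hT hne
      by_cases hy : x0 ∈ T
      · have := hA1 T hT hy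
        have := pot_cap G w (y := x0) 4 T (h.adm.1 _) (by norm_num)
        linarith
      · rw [pot_cap_not G w 4 hy]
        exact h.adm.2 T (hT.trans Finset.subset_union_left) hne⟩
  obtain ⟨J, hJ⟩ := h.ih G (cap w y0 4) Y cY ⟨fun v => (cap_le _ _ _ _).trans (h.adm.1 v), by
      intro T hT hne
      by_cases hy : y0 ∈ T
      · have := hB1 T hT hy
        have := pot_cap G w (y := y0) 4 T (h.adm.1 _) (by norm_num)
        linarith
      · rw [pot_cap_not G w 4 hy]
        exact h.adm.2 T (hT.trans Finset.subset_union_right) hne⟩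
  exact h.nocol _ (hI.uncap.union hJ.uncap hd he
    (fun _ hh => absurd hh (hI.cap_notMem (by norm_num)))
    (fun _ hh => absurd hh (hJ.cap_notMem (by norm_num))))

lemma nb_erase (G : SimpleGraph V) (W : Finset V) (v : V) : nb G (W.erase v) v = nb G W v := by
  unfold nb
  congr 2
  ext x
  simp only [Finset.mem_filter, Finset.mem_erase]
  constructor
  · rintro ⟨⟨_, h2⟩, h3⟩; exact ⟨h2, h3⟩
  · rintro ⟨h2, h3⟩; exact ⟨⟨h3.ne', h2⟩, h3⟩

lemma MC.two_le {G : SimpleGraph V} {w : V → ℤ} {W : Finset V} (h : MC G w W) {v : V}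
    (hv : v ∈ W) : 2 ≤ nb G W v := by
  by_contra hlt
  have hle : (W.filter (fun u => G.Adj v u)).card ≤ 1 := by
    unfold nb at hlt; omega
  have hcard := h.card_two
  have hW : W = {v} ∪ W.erase v := by
    ext x; simp only [Finset.mem_union, Finset.mem_singleton, Finset.mem_erase]
    constructor
    · intro hx; by_cases hh : x = v <;> simp [hh, hx]
    · rintro (rfl | hx)
      · exact hv
      · exact hx.2
  have hd : Disjoint {v} (W.erase v) := by simp
  obtain ⟨y, hy⟩ : (W.erase v).Nonempty := by
    rw [← Finset.card_pos, Finset.card_erase_of_mem hv]; omega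
  by_cases hn : ∃ z ∈ W, G.Adj v z
  · obtain ⟨z, hz, hvz⟩ := hn
    refine h.cut hW hd (x0 := v) (y0 := z) (by simp) (by simp [hz, hvz.ne']) ?_
    intro x hx u hu ha
    have hx := Finset.mem_singleton.1 hx
    subst hx
    refine ⟨rfl, Finset.card_le_one.1 hle u ?_ z ?_⟩
    · simp only [Finset.mem_filter]; exact ⟨(Finset.mem_erase.1 hu).2, ha⟩
    · simp [hz, hvz]
  · push Not at hn
    refine h.cut hW hd (x0 := v) (y0 := y) (by simp) hy ?_
    intro x hx u hu ha
    have hx := Finset.mem_singleton.1 hx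
    subst hx
    exact absurd ha (hn u (Finset.mem_erase.1 hu).2)

/-- the graph obtained by contracting `S` (its part outside `I`) to `d` -/
def contr (G : SimpleGraph V) (S I : Finset V) (d : V) (hd : d ∈ S) : SimpleGraph V where
  Adj u v := (u ∉ S ∧ v ∉ S ∧ G.Adj u v) ∨ (u = d ∧ v ∉ S ∧ ∃ s ∈ S \ I, G.Adj v s) ∨
    (v = d ∧ u ∉ S ∧ ∃ s ∈ S \ I, G.Adj u s)
  symm := ⟨fun u v h => by
    rcases h with ⟨h1, h2, h3⟩ | h | h
    · exact Or.inl ⟨h2, h1, h3.symm⟩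
    · exact Or.inr (Or.inr h)
    · exact Or.inr (Or.inl h)⟩
  loopless := ⟨fun u h => by
    rcases h with ⟨_, _, h3⟩ | ⟨rfl, h, _⟩ | ⟨rfl, h, _⟩
    · exact G.loopless.irrefl _ h3
    · exact h hd
    · exact h hd⟩

lemma four_dvd_pot (G : SimpleGraph V) (T : Finset V) : (4 : ℤ) ∣ pot G (fun _ => 4) T := by
  induction T using Finset.induction_on with
  | empty => simp [pot_empty]
  | insert a T ha ih =>
    rw [pot_insert _ _ ha]
    obtain ⟨k, hk⟩ := ih
    exact ⟨k + 1 - nb G T a, by rw [hk]; ring⟩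

lemma MC.gap {G : SimpleGraph V} {w : V → ℤ} {W : Finset V} (h : MC G w W) {S : Finset V}
    (hS : S ⊆ W) (hSW : S ≠ W) (hS2 : 2 ≤ S.card) : 3 ≤ pot G w S := by
  by_contra hlt
  have hne : (W.powerset.filter
      (fun T => T ≠ W ∧ 2 ≤ T.card ∧ pot G w T ≤ 2)).Nonempty :=
    ⟨S, by simp only [Finset.mem_filter, Finset.mem_powerset]; exact ⟨hS, hSW, hS2, by omega⟩⟩
  obtain ⟨S0, hS0, hmax⟩ := Finset.exists_max_image _ Finset.card hne
  simp only [Finset.mem_filter, Finset.mem_powerset] at hS0 hmax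
  clear hne hlt hS2 hSW hS S
  obtain ⟨hS, hSW, hS2, hp2⟩ := hS0
  generalize S0 = S at *
  have hmx : ∀ T ⊆ W, T ≠ W → S ⊂ T → 3 ≤ pot G w T := by
    intro T hT hTW hST
    by_contra hlt
    have h1 := hmax T ⟨hT, hTW, by have := Finset.card_lt_card hST; omega, by omega⟩
    have := Finset.card_lt_card hST; omega
  clear hmax
  have hw5 := h.adm.1
  -- vertices outside
  have hins : ∀ x ∈ W, x ∉ S → 4 * nb G S x ≤ 1 + w x := by
    intro x hx hxS
    have h1 := h.adm.2 (insert x S) (Finset.insert_subset hx hS) ⟨x, by simp⟩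
    rw [pot_insert G w hxS] at h1
    linarith
  have hnb1 : ∀ x ∈ W, x ∉ S → nb G S x ≤ 1 := by
    intro x hx hxS
    have := hins x hx hxS
    have := hw5 x
    omega
  have huniq : ∀ x ∈ W, x ∉ S → ∀ p ∈ S, ∀ q ∈ S, G.Adj x p → G.Adj x q → p = q := by
    intro x hx hxS p hp q hq h1 h2
    by_contra hpq
    have := nb_two G hp hq hpq h1 h2
    have := hnb1 x hx hxS
    omega
  have hw3 : ∀ x ∈ W, x ∉ S → ∀ p ∈ S, G.Adj x p → 3 ≤ w x := by
    intro x hx hxS p hp h1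
    have := nb_pos G hp h1
    have := hins x hx hxS
    omega
  have hcS : S.card < W.card := Finset.card_lt_card (hS.ssubset_of_ne hSW)
  obtain ⟨I, hI⟩ := h.ih G w S hcS (h.adm.mono hS)
  obtain ⟨d, hd⟩ : S.Nonempty := by rw [← Finset.card_pos]; omega
  set G' := contr G S I d hd with hG'
  set w' : V → ℤ := fun u => if u ∈ S then 2 else
    if ∃ s ∈ I, G.Adj u s then min (w u) 2 else w u with hw'
  set m : V → ℤ := fun x => if ∃ s ∈ I, G.Adj x s then 1 else 0 with hm
  set l : V → ℤ := fun x => if ∃ s ∈ S \ I, G.Adj x s then 1 else 0 with hl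
  have hm0 : ∀ x, 0 ≤ m x := by intro x; simp only [hm]; split_ifs <;> norm_num
  have hl0 : ∀ x, 0 ≤ l x := by intro x; simp only [hl]; split_ifs <;> norm_num
  have hml : ∀ x ∈ W, x ∉ S → nb G S x = m x + l x := by
    intro x hx hxS
    simp only [hm, hl]
    have h1 := hnb1 x hx hxS
    have h0 := nb_nonneg G S x
    by_cases hA : ∃ s ∈ I, G.Adj x s
    · rw [if_pos hA]
      obtain ⟨s, hs, hxs⟩ := hA
      rw [if_neg]
      · have := nb_pos G (hI.sub hs) hxs; omega
      · rintro ⟨t, ht, hxt⟩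
        have := huniq x hx hxS s (hI.sub hs) t (Finset.sdiff_subset ht) hxs hxt
        subst this
        exact (Finset.mem_sdiff.1 ht).2 hs
    · rw [if_neg hA]
      by_cases hB : ∃ s ∈ S \ I, G.Adj x s
      · rw [if_pos hB]
        obtain ⟨s, hs, hxs⟩ := hB
        have := nb_pos G (Finset.sdiff_subset hs) hxs; omega
      · rw [if_neg hB]
        unfold nb
        rw [Finset.filter_eq_empty_iff.2]
        · simp
        · intro s hs hxs
          by_cases hsI : s ∈ I
          · exact hA ⟨s, hsI, hxs⟩
          · exact hB ⟨s, Finset.mem_sdiff.2 ⟨hs, hsI⟩, hxs⟩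
  have hGS : ∀ u v, u ∉ S → v ∉ S → (G'.Adj u v ↔ G.Adj u v) := by
    intro u v hu hv
    constructor
    · rintro (h1 | ⟨rfl, h2⟩ | ⟨rfl, h2⟩)
      · exact h1.2.2
      · exact absurd hd hu
      · exact absurd hd hv
    · intro h1; exact Or.inl ⟨hu, hv, h1⟩
  have hGd : ∀ v, v ∉ S → (G'.Adj d v ↔ ∃ s ∈ S \ I, G.Adj v s) := by
    intro v hv
    constructor
    · rintro (h1 | ⟨_, _, h2⟩ | ⟨rfl, h2⟩)
      · exact absurd hd h1.1
      · exact h2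
      · exact absurd hd hv
    · intro h1; exact Or.inr (Or.inl ⟨rfl, hv, h1⟩)
  have hnbd : ∀ Q : Finset V, Disjoint S Q → nb G' Q d = ∑ x ∈ Q, l x := by
    intro Q hQ
    rw [nb_eq_sum]
    apply Finset.sum_congr rfl
    intro x hx
    have hxS : x ∉ S := fun hh => Finset.disjoint_left.1 hQ hh hx
    simp only [hl, hGd x hxS]
  have hww' : ∀ x, x ∉ S → w x - w' x ≤ 3 * m x := by
    intro x hxS
    simp only [hw', hm, if_neg hxS]
    have := hw5 x
    split_ifs
    · rcases min_cases (w x) 2 with h1 | h1 <;> linarith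
    · linarith
  have hw'le : ∀ x, x ∉ S → w' x ≤ w x := by
    intro x hxS
    simp only [hw', if_neg hxS]
    split_ifs
    · exact min_le_left _ _
    · exact le_rfl
  have hw'd : ∀ x ∈ S, w' x = 2 := by intro x hx; simp only [hw', if_pos hx]
  have hw'I : ∀ x, x ∉ S → ∀ s ∈ I, G.Adj x s → w' x ≤ 2 := by
    intro x hxS s hs hxs
    simp only [hw', if_neg hxS]
    rw [if_pos ⟨s, hs, hxs⟩]; exact min_le_right _ _
  -- potentials of subsets outside
  have key : ∀ Q ⊆ W, Disjoint S Q →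
      pot G w (S ∪ Q) - 2 + ∑ x ∈ Q, m x + 4 * ∑ x ∈ Q, l x ≤ pot G' w' Q ∧
      pot G w Q - 3 * ∑ x ∈ Q, m x ≤ pot G' w' Q := by
    intro Q hQW hQ
    have hout : ∀ x ∈ Q, x ∉ S := fun x hx hh => Finset.disjoint_left.1 hQ hh hx
    have e1 : pot G' w' Q = pot G w' Q :=
      pot_congr _ _ _ _ (fun u hu v hv => hGS u v (hout u hu) (hout v hv)) (fun _ _ => rfl)
    have e2 := pot_weight G w w' Q
    have e3 : ∑ x ∈ Q, (w x - w' x) ≤ 3 * ∑ x ∈ Q, m x := by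
      rw [Finset.mul_sum]
      exact Finset.sum_le_sum fun x hx => hww' x (hout x hx)
    have e4 := pot_union G w hQ
    have e5 : ∑ x ∈ Q, nb G S x = ∑ x ∈ Q, m x + ∑ x ∈ Q, l x := by
      rw [← Finset.sum_add_distrib]
      exact Finset.sum_congr rfl fun x hx => hml x (hQW hx) (hout x hx)
    rw [e5] at e4
    constructor <;> linarith
  have hW'card : (insert d (W \ S)).card < W.card := by
    have h1 := Finset.card_insert_le d (W \ S)
    have h2 := Finset.card_sdiff_add_card_eq_card hS
    omega
  have hadm : Adm G' w' (insert d (W \ S)) := by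
    constructor
    · intro v
      by_cases hv : v ∈ S
      · rw [hw'd v hv]; norm_num
      · exact (hw'le v hv).trans (hw5 v)
    have base : ∀ Q ⊆ W \ S, Q.Nonempty → 1 ≤ pot G' w' Q := by
      intro Q hQ hQn
      have hQW : Q ⊆ W := hQ.trans Finset.sdiff_subset
      have hdis : Disjoint S Q := Finset.disjoint_left.2 fun x hx hx' =>
        (Finset.mem_sdiff.1 (hQ hx')).2 hx
      obtain ⟨k1, k2⟩ := key Q hQW hdis
      have M0 : 0 ≤ ∑ x ∈ Q, m x := Finset.sum_nonneg fun x _ => hm0 x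
      have L0 : 0 ≤ ∑ x ∈ Q, l x := Finset.sum_nonneg fun x _ => hl0 x
      have p1 := h.adm.2 Q hQW hQn
      have p2 := h.adm.2 (S ∪ Q) (Finset.union_subset hS hQW) ⟨d, by simp [hd]⟩
      by_cases hM : ∑ x ∈ Q, m x = 0
      · omega
      by_cases hM2 : 2 ≤ ∑ x ∈ Q, m x
      · omega
      by_cases hL : 1 ≤ ∑ x ∈ Q, l x
      · omega
      by_cases hall : S ∪ Q = W
      · exfalso
        have hsum : ∑ x ∈ Q, nb G S x = 1 := by
          have : ∑ x ∈ Q, nb G S x = ∑ x ∈ Q, m x + ∑ x ∈ Q, l x := by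
            rw [← Finset.sum_add_distrib]
            exact Finset.sum_congr rfl fun x hx =>
              hml x (hQW hx) (Finset.mem_sdiff.1 (hQ hx)).2
          omega
        obtain ⟨x0, hx0, hx0n⟩ : ∃ x0 ∈ Q, nb G S x0 ≠ 0 := by
          by_contra hh
          push Not at hh
          rw [Finset.sum_eq_zero hh] at hsum
          exact absurd hsum (by norm_num)
        obtain ⟨s0, hs0, hxs⟩ : ∃ s0 ∈ S, G.Adj x0 s0 := by
          by_contra hh
          push Not at hh
          apply hx0n
          unfold nb
          rw [Finset.filter_eq_empty_iff.2 (fun s hs => hh s hs)]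
          simp
        refine h.cut hall.symm hdis hs0 hx0 ?_
        intro s hs x hx hsx
        have hxx : x = x0 := by
          by_contra hne
          have h1 := Finset.add_sum_erase Q (fun x => nb G S x) hx0
          have h2 := Finset.single_le_sum (f := fun x => nb G S x)
            (fun i _ => nb_nonneg G S i) (Finset.mem_erase.2 ⟨hne, hx⟩)
          have h3 := nb_pos G hs hsx.symm
          have h4 := nb_pos G hs0 hxs
          omega
        subst hxx
        exact ⟨huniq x (hQW hx) (Finset.mem_sdiff.1 (hQ hx)).2 s hs s0 hs0 hsx.symm hxs, rfl⟩
      · have := hmx (S ∪ Q) (Finset.union_subset hS hQW) hall (by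
          refine Finset.ssubset_iff_subset_ne.2 ⟨Finset.subset_union_left, ?_⟩
          intro hh
          obtain ⟨x, hx⟩ := hQn
          exact (Finset.mem_sdiff.1 (hQ hx)).2 (hh ▸ Finset.mem_union_right _ hx))
        omega
    intro T hT hTn
    by_cases hdT : d ∈ T
    · obtain ⟨Q, hQd, rfl⟩ : ∃ Q, d ∉ Q ∧ T = insert d Q :=
        ⟨T.erase d, by simp, (Finset.insert_erase hdT).symm⟩
      have hQ : Q ⊆ W \ S := by
        intro x hx
        rcases Finset.mem_insert.1 (hT (Finset.mem_insert_of_mem hx)) with rfl | h1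
        · exact absurd hx hQd
        · exact h1
      have hQW : Q ⊆ W := hQ.trans Finset.sdiff_subset
      have hdis : Disjoint S Q := Finset.disjoint_left.2 fun x hx hx' =>
        (Finset.mem_sdiff.1 (hQ hx')).2 hx
      rw [pot_insert _ _ hQd, hnbd Q hdis, hw'd d hd]
      obtain ⟨k1, k2⟩ := key Q hQW hdis
      have M0 : 0 ≤ ∑ x ∈ Q, m x := Finset.sum_nonneg fun x _ => hm0 x
      have p2 := h.adm.2 (S ∪ Q) (Finset.union_subset hS hQW) ⟨d, by simp [hd]⟩
      omega
    · apply base T _ hTn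
      intro x hx
      rcases Finset.mem_insert.1 (hT hx) with rfl | h1
      · exact absurd hx hdT
      · exact h1
  obtain ⟨J, hJ⟩ := h.ih G' w' _ hW'card hadm
  have hdJ : ∀ v ∈ J, v ∉ S := by
    intro v hv hvS
    have := hJ.typ v hv
    rw [hw'd v hvS] at this
    omega
  have hJW : ∀ v ∈ J, v ∈ W := by
    intro v hv
    rcases Finset.mem_insert.1 (hJ.sub hv) with rfl | h1
    · exact hS hd
    · exact Finset.sdiff_subset h1
  have hJS : ∀ v ∈ J, ∀ s ∈ S, ¬ G.Adj v s := by
    intro v hv s hs ha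
    by_cases hsI : s ∈ I
    · have h1 := hw'I v (hdJ v hv) s hsI ha
      have := hJ.typ v hv
      omega
    · have h1 : G'.Adj d v := (hGd v (hdJ v hv)).2 ⟨s, Finset.mem_sdiff.2 ⟨hs, hsI⟩, ha⟩
      have h2 := hJ.adjT v hv d (by simp) h1.symm
      rw [hw'd d hd] at h2
      omega
  have hW' : ∀ x ∈ W, x ∉ S → x ∈ insert d (W \ S) := by
    intro x hx hxS
    exact Finset.mem_insert_of_mem (Finset.mem_sdiff.2 ⟨hx, hxS⟩)
  have hIJ : ∀ x ∈ W, x ∉ S → ∀ s ∈ I, ∀ v ∈ J, G.Adj x s → ¬ G.Adj x v := by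
    intro x hx hxS s hs v hv hxs hxv
    have h1 := hw'I x hxS s hs hxs
    have h2 := hJ.adjT v hv x (hW' x hx hxS) ((hGS v x (hdJ v hv) hxS).2 hxv.symm)
    omega
  apply h.nocol (I ∪ J)
  refine ⟨?_, ?_, ?_, ?_, ?_, ?_⟩
  · exact Finset.union_subset (hI.sub.trans hS) hJW
  · intro v hv
    rcases Finset.mem_union.1 hv with hv | hv
    · exact hI.typ v hv
    · exact (hJ.typ v hv).trans (hw'le v (hdJ v hv))
  · intro v hv u hu ha
    rcases Finset.mem_union.1 hv with hv | hv
    · by_cases huS : u ∈ S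
      · exact hI.adjT v hv u huS ha
      · exact hw3 u hu huS v (hI.sub hv) ha.symm
    · by_cases huS : u ∈ S
      · exact absurd ha (hJS v hv u huS)
      · exact (hJ.adjT v hv u (hW' u hu huS) ((hGS v u (hdJ v hv) huS).2 ha)).trans
          (hw'le u huS)
  · intro u hu v hv ha
    rcases Finset.mem_union.1 hu with hu | hu <;> rcases Finset.mem_union.1 hv with hv | hv
    · exact hI.ind u hu v hv ha
    · exact hJS v hv u (hI.sub hu) ha.symm
    · exact hJS u hu v (hI.sub hv) ha
    · exact hJ.ind u hu v hv ((hGS u v (hdJ u hu) (hdJ v hv)).2 ha)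
  · intro x hx u hu v hv hxu hxv
    by_cases hxS : x ∈ S
    · rcases Finset.mem_union.1 hu with hu | hu
      · rcases Finset.mem_union.1 hv with hv | hv
        · exact hI.dist x hxS u hu v hv hxu hxv
        · exact absurd hxv.symm (hJS v hv x hxS)
      · exact absurd hxu.symm (hJS u hu x hxS)
    · rcases Finset.mem_union.1 hu with hu | hu <;> rcases Finset.mem_union.1 hv with hv | hv
      · exact huniq x hx hxS u (hI.sub hu) v (hI.sub hv) hxu hxv
      · exact absurd hxv (hIJ x hx hxS u hu v hv hxu)
      · exact absurd hxu (hIJ x hx hxS v hv u hu hxv)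
      · exact hJ.dist x (hW' x hx hxS) u hu v hv ((hGS x u hxS (hdJ u hu)).2 hxu)
          ((hGS x v hxS (hdJ v hv)).2 hxv)
  · intro R hR hne
    have hRW : R ⊆ W := hR.trans Finset.sdiff_subset
    have e : R = (R ∩ S) ∪ (R \ S) := by
      rw [Finset.union_comm, Finset.sdiff_union_inter]
    have hdis : Disjoint (R ∩ S) (R \ S) :=
      (Finset.disjoint_sdiff (s := S) (t := R)).mono_left Finset.inter_subset_right
    have hdis2 : Disjoint S (R \ S) := Finset.disjoint_sdiff
    have hsA : R ∩ S ⊆ S \ I := by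
      intro z hz
      have := hR (Finset.mem_inter.1 hz).1
      simp only [Finset.mem_sdiff, Finset.mem_union, not_or] at this
      exact Finset.mem_sdiff.2 ⟨(Finset.mem_inter.1 hz).2, this.2.1⟩
    have hsQ : R \ S ⊆ insert d (W \ S) \ J := by
      intro z hz
      have hz' := Finset.mem_sdiff.1 hz
      have := hR hz'.1
      simp only [Finset.mem_sdiff, Finset.mem_union, not_or] at this
      exact Finset.mem_sdiff.2 ⟨hW' z this.1 hz'.2, this.2.2⟩
    have hpQ : pot G' (fun _ => 4) (R \ S) = pot G (fun _ => 4) (R \ S) :=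
      pot_congr _ _ _ _ (fun u hu v hv => hGS u v (Finset.mem_sdiff.1 hu).2
        (Finset.mem_sdiff.1 hv).2) (fun _ _ => rfl)
    rcases (R ∩ S).eq_empty_or_nonempty with hX0 | hX0
    · rw [hX0, Finset.empty_union] at e
      rw [e] at hne ⊢
      rw [← hpQ]
      exact hJ.forest _ hsQ hne
    have p1 := hI.forest _ hsA hX0
    have hdQ : d ∉ R \ S := by simp [hd]
    have p2 := hJ.forest (insert d (R \ S)) (by
      apply Finset.insert_subset _ hsQ
      simp only [Finset.mem_sdiff, Finset.mem_insert, true_or, true_and]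
      exact fun hh => hdJ d hh hd) ⟨d, by simp⟩
    rw [pot_insert _ _ hdQ, hpQ, hnbd _ hdis2] at p2
    have p3 : ∑ b ∈ R \ S, nb G (R ∩ S) b ≤ ∑ x ∈ R \ S, l x := by
      apply Finset.sum_le_sum
      intro x hx
      have hx' := Finset.mem_sdiff.1 hx
      have hle : nb G (R ∩ S) x ≤ nb G S x := nb_mono G Finset.inter_subset_right x
      have hle1 := hnb1 x (hRW hx'.1) hx'.2
      simp only [hl]
      split_ifs with hh
      · omega
      · unfold nb
        rw [Finset.filter_eq_empty_iff.2]
        · simp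
        · intro s hs hxs
          exact hh ⟨s, hsA hs, hxs⟩
    rw [e, pot_union _ _ hdis]
    obtain ⟨k1, hk1⟩ := four_dvd_pot G (R ∩ S)
    obtain ⟨k2, hk2⟩ := four_dvd_pot G (R \ S)
    generalize (∑ b ∈ R \ S, nb G (R ∩ S) b) = a1 at *
    generalize (∑ x ∈ R \ S, l x) = a2 at *
    omega

lemma Col.addF_leaf {G : SimpleGraph V} {w : V → ℤ} {W I : Finset V} (h : Col G w W I) {v p : V}
    (hv : v ∉ W) (hw : 3 ≤ w v) (hn : ∀ u ∈ W, G.Adj v u → u = p) : Col G w (insert v W) I :=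
  h.addF hv (fun a ha b hb _ _ h1 h2 => (hn a ha h1).trans (hn b hb h2).symm)
    (fun a ha b hb h1 h2 => (hn a (h.sub ha) h1).trans (hn b (h.sub hb) h2).symm)
    (fun _ _ _ => hw)

lemma Col.addF_two {G : SimpleGraph V} {w : V → ℤ} {W I : Finset V} (h : Col G w W I) {v p q : V}
    (hv : v ∉ W) (hw : 3 ≤ w v) (hp : p ∈ I) (hq : q ∉ I)
    (hn : ∀ u ∈ W, G.Adj v u → u = p ∨ u = q) : Col G w (insert v W) I := by
  refine h.addF hv ?_ ?_ (fun _ _ _ => hw)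
  · intro a ha b hb haI hbI h1 h2
    rcases hn a ha h1 with rfl | rfl
    · exact absurd hp haI
    · rcases hn b hb h2 with rfl | rfl
      · exact absurd hp hbI
      · rfl
  · intro a ha b hb h1 h2
    rcases hn a (h.sub ha) h1 with rfl | rfl
    · rcases hn b (h.sub hb) h2 with rfl | rfl
      · rfl
      · exact absurd hb hq
    · exact absurd ha hq

lemma Col.toF {G : SimpleGraph V} {w : V → ℤ} {W I : Finset V} (h : Col G w W I) {m : V}
    (hmI : m ∈ I) (hw : 3 ≤ w m)
    (hn : ∀ a ∈ W, ∀ b ∈ W, G.Adj m a → G.Adj m b → a = b) : Col G w W (I.erase m) := by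
  have h1 := h.restrict (Finset.erase_subset m W)
  have h2 := h1.addF (v := m) (by simp)
    (fun a ha b hb _ _ => hn a (Finset.erase_subset _ _ ha) b (Finset.erase_subset _ _ hb))
    (fun a ha b hb => hn a (h.sub (Finset.inter_subset_left ha)) b
      (h.sub (Finset.inter_subset_left hb))) (fun _ _ _ => hw)
  rw [Finset.insert_erase (h.sub hmI)] at h2
  convert h2 using 1
  ext x
  simp only [Finset.mem_erase, Finset.mem_inter]
  constructor
  · rintro ⟨h3, h4⟩; exact ⟨h4, h3, h.sub h4⟩
  · rintro ⟨h3, h4, _⟩; exact ⟨h4, h3⟩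

lemma Forest.unE {G : SimpleGraph V} {B : Finset V} {c y : V} (hcy : c ≠ y)
    (h : Forest (addE G c y) B) : Forest G B := by
  intro S hS hne
  have h1 := h S hS hne
  refine h1.trans_le ?_
  unfold pot
  apply Finset.sum_le_sum
  intro v _
  have : nb G S v ≤ nb (addE G c y) S v := by
    unfold nb
    have : S.filter (fun u => G.Adj v u) ⊆ S.filter (fun u => (addE G c y).Adj v u) := by
      intro x hx
      simp only [Finset.mem_filter] at hx ⊢
      exact ⟨hx.1, (addE_adj G hcy _ _).2 (Or.inl hx.2)⟩
    exact_mod_cast Finset.card_le_card this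
  linarith

lemma Col.unE {G : SimpleGraph V} {w : V → ℤ} {W I : Finset V} {c y : V} (hcy : c ≠ y)
    (h : Col (addE G c y) w W I) : Col G w W I where
  sub := h.sub
  typ := h.typ
  adjT v hv u hu ha := h.adjT v hv u hu ((addE_adj G hcy _ _).2 (Or.inl ha))
  ind u hu v hv ha := h.ind u hu v hv ((addE_adj G hcy _ _).2 (Or.inl ha))
  dist x hx u hu v hv h1 h2 := h.dist x hx u hu v hv ((addE_adj G hcy _ _).2 (Or.inl h1))
    ((addE_adj G hcy _ _).2 (Or.inl h2))
  forest := h.forest.unE hcy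

/-- unrestricted vertices of degree two -/
def U2 (G : SimpleGraph V) (w : V → ℤ) (W : Finset V) (x : V) : Prop :=
  x ∈ W ∧ w x = 5 ∧ nb G W x = 2

lemma nb_card {G : SimpleGraph V} {W : Finset V} {x : V} {k : ℕ} (h : nb G W x = k) :
    (W.filter (fun u => G.Adj x u)).card = k := by
  unfold nb at h; exact_mod_cast h

lemma U2.other {G : SimpleGraph V} {w : V → ℤ} {W : Finset V} {x v : V} (h : U2 G w W x)
    (hv : v ∈ W) (ha : G.Adj x v) :
    ∃ q ∈ W, q ≠ v ∧ ∀ u ∈ W, (G.Adj x u ↔ u = v ∨ u = q) := by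
  have h1 := nb_card (k := 2) h.2.2
  obtain ⟨a, b, hab, e⟩ := Finset.card_eq_two.1 h1
  have hm : ∀ u, (u ∈ W ∧ G.Adj x u) ↔ (u = a ∨ u = b) := by
    intro u
    have : u ∈ W.filter (fun u => G.Adj x u) ↔ u ∈ ({a, b} : Finset V) := by rw [e]
    simpa using this
  have haW := (hm a).2 (Or.inl rfl)
  have hbW := (hm b).2 (Or.inr rfl)
  rcases (hm v).1 ⟨hv, ha⟩ with rfl | rfl
  · refine ⟨b, hbW.1, hab.symm, fun u hu => ?_⟩
    rw [← hm]; exact ⟨fun h => ⟨hu, h⟩, fun h => h.2⟩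
  · refine ⟨a, haW.1, hab, fun u hu => ?_⟩
    rw [or_comm, ← hm]; exact ⟨fun h => ⟨hu, h⟩, fun h => h.2⟩

lemma MC.R1 {G : SimpleGraph V} {w : V → ℤ} {W : Finset V} (h : MC G w W) {v : V} (hv : v ∈ W)
    (hwv : w v = 5) (hN : ∀ n ∈ W, G.Adj v n → U2 G w W n) (P : Finset V) (hP : P.card ≤ 2)
    (hP2 : ∀ n ∈ W, G.Adj v n → ∀ m ∈ W, m ≠ v → G.Adj n m → m ∈ P ∨ U2 G w W m) : False := by
  set N := W.filter (fun u => G.Adj v u) with hNdef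
  set W' := (W \ N).erase v with hW'
  set w' : V → ℤ := fun x => if x ∈ P then min (w x) 4 else w x with hw'
  have hmW : ∀ x, x ∈ W' ↔ x ∈ W ∧ x ≠ v ∧ ¬ G.Adj v x := by
    intro x
    simp only [hW', hNdef, Finset.mem_erase, Finset.mem_sdiff, Finset.mem_filter]
    tauto
  have hsub : W' ⊆ W := fun x hx => ((hmW x).1 hx).1
  have hvW' : v ∉ W' := by simp [hW']
  have hle : ∀ x, w' x ≤ w x := by
    intro x; simp only [hw']; split_ifs
    · exact min_le_left _ _
    · exact le_rfl
  have hle1 : ∀ x, w x - w' x ≤ if x ∈ P then 1 else 0 := by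
    intro x; simp only [hw']
    have := h.adm.1 x
    split_ifs
    · rcases min_cases (w x) 4 with h1 | h1 <;> linarith
    · linarith
  have hadm : Adm G w' W' := by
    refine ⟨fun x => (hle x).trans (h.adm.1 x), ?_⟩
    intro T hT hne
    by_cases h2 : 2 ≤ T.card
    · have g := h.gap (hT.trans hsub) (by rintro rfl; exact hvW' (hT hv)) h2
      rw [pot_weight G w w' T]
      have : ∑ x ∈ T, (w x - w' x) ≤ 2 := by
        refine (Finset.sum_le_sum fun x _ => hle1 x).trans ?_
        rw [← Finset.sum_filter]
        simp only [Finset.sum_const, nsmul_eq_mul, mul_one]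
        have : (T.filter (fun x => x ∈ P)).card ≤ P.card :=
          Finset.card_le_card fun x hx => (Finset.mem_filter.1 hx).2
        exact_mod_cast this.trans hP
      linarith
    · obtain ⟨x, rfl⟩ : ∃ x, T = {x} := by
        apply Finset.card_eq_one.1
        have := hne.card_pos; omega
      have := h.adm.2 {x} (hT.trans hsub) hne
      rw [pot_singleton] at this ⊢
      simp only [hw']
      split_ifs
      · exact le_min this (by norm_num)
      · exact this
  have hc : W'.card < W.card := Finset.card_lt_card
    (Finset.ssubset_iff_subset_ne.2 ⟨hsub, by intro hh; rw [hh] at hvW'; exact hvW' hv⟩)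
  obtain ⟨I0, hI0⟩ := h.ih G w' W' hc hadm
  have hI0P : ∀ x ∈ I0, x ∉ P := by
    intro x hx hxP
    have := hI0.typ x hx
    simp only [hw', if_pos hxP] at this
    have := min_le_right (w x) 4
    linarith
  have hI1 : Col G w W' I0 := hI0.weight fun x _ => hle x
  -- move leaves to the forest
  have step : ∀ M : Finset V, (∀ m ∈ M, 3 ≤ w m ∧
      ∀ a ∈ W', ∀ b ∈ W', G.Adj m a → G.Adj m b → a = b) →
      ∃ J ⊆ I0, Col G w W' J ∧ ∀ m ∈ M, m ∉ J := by
    intro M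
    induction M using Finset.induction_on with
    | empty => intro _; exact ⟨I0, subset_rfl, hI1, by simp⟩
    | insert m M hm ih =>
      intro hM
      obtain ⟨J, hJ1, hJ2, hJ3⟩ := ih fun x hx => hM x (Finset.mem_insert_of_mem hx)
      by_cases hmJ : m ∈ J
      · refine ⟨J.erase m, (Finset.erase_subset _ _).trans hJ1,
          hJ2.toF hmJ (hM m (by simp)).1 (hM m (by simp)).2, ?_⟩
        intro x hx
        rcases Finset.mem_insert.1 hx with rfl | hx
        · simp
        · exact fun hh => hJ3 x hx (Finset.erase_subset _ _ hh)
      · refine ⟨J, hJ1, hJ2, ?_⟩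
        intro x hx
        rcases Finset.mem_insert.1 hx with rfl | hx
        · exact hmJ
        · exact hJ3 x hx
  obtain ⟨J, hJI, hJ, hJM⟩ := step (W'.filter fun m => U2 G w W m ∧ ∃ n ∈ N, G.Adj n m) (by
    intro m hm
    obtain ⟨hmW', hmU, n, hn, hnm⟩ := Finset.mem_filter.1 hm
    refine ⟨by rw [hmU.2.1]; norm_num, ?_⟩
    have hnW : n ∈ W := (Finset.mem_filter.1 hn).1
    have hvn : G.Adj v n := (Finset.mem_filter.1 hn).2
    obtain ⟨q, _, _, hq⟩ := hmU.other hnW hnm.symm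
    intro a ha b hb h1 h2
    have ha' := (hq a (hsub ha)).1 h1
    have hb' := (hq b (hsub hb)).1 h2
    have hna : a ≠ n := by rintro rfl; exact ((hmW _).1 ha).2.2 hvn
    have hnb : b ≠ n := by rintro rfl; exact ((hmW _).1 hb).2.2 hvn
    rw [ha'.resolve_left hna, hb'.resolve_left hnb])
  have step2 : ∀ M : Finset V, M ⊆ N → Col G w (M ∪ W') J := by
    intro M
    induction M using Finset.induction_on with
    | empty => intro _; simpa using hJ
    | insert m M hm ih =>
      intro hM
      have hmN := hM (Finset.mem_insert_self _ _)
      obtain ⟨hmW2, hvm⟩ := Finset.mem_filter.1 hmN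
      have hMN : M ⊆ N := fun x hx => hM (Finset.mem_insert_of_mem hx)
      have hU := hN m hmW2 hvm
      obtain ⟨q, _, _, hq⟩ := hU.other hv hvm.symm
      rw [Finset.insert_union]
      refine (ih hMN).addF_leaf (p := q) ?_ (by rw [hU.2.1]; norm_num) ?_
      · simp only [Finset.mem_union, not_or]
        exact ⟨hm, fun hh => ((hmW _).1 hh).2.2 hvm⟩
      · intro u hu hmu
        have huW : u ∈ W := by
          rcases Finset.mem_union.1 hu with h1 | h1
          · exact (Finset.mem_filter.1 (hMN h1)).1
          · exact hsub h1
        refine ((hq u huW).1 hmu).resolve_left ?_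
        rintro rfl
        rcases Finset.mem_union.1 hu with h1 | h1
        · exact G.loopless.irrefl _ (Finset.mem_filter.1 (hMN h1)).2
        · exact hvW' h1
  have hfin := (step2 N subset_rfl).addI (v := v) (by
    simp only [Finset.mem_union, not_or]
    exact ⟨fun hh => G.loopless.irrefl _ (Finset.mem_filter.1 hh).2, hvW'⟩) (by rw [hwv]) (by
    intro p hp hvp
    have hpW : p ∈ W := by
      rcases Finset.mem_union.1 hp with h1 | h1
      · exact (Finset.mem_filter.1 h1).1
      · exact hsub h1
    refine ⟨fun hh => ((hmW _).1 (hJ.sub hh)).2.2 hvp, by rw [(hN p hpW hvp).2.1]; norm_num, ?_⟩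
    intro q hq hpq
    have hqW' := (hmW q).1 (hJ.sub hq)
    rcases hP2 p hpW hvp q hqW'.1 hqW'.2.1 hpq with h1 | h1
    · exact hI0P q (hJI hq) h1
    · exact hJM q (Finset.mem_filter.2 ⟨hJ.sub hq, h1, p,
        Finset.mem_filter.2 ⟨hpW, hvp⟩, hpq⟩) hq)
  have e : insert v (N ∪ W') = W := by
    ext x
    simp only [Finset.mem_insert, Finset.mem_union, hmW, hNdef, Finset.mem_filter]
    constructor
    · rintro (rfl | h1 | h1)
      · exact hv
      · exact h1.1
      · exact h1.1
    · intro hx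
      by_cases h1 : x = v
      · exact Or.inl h1
      · by_cases h2 : G.Adj v x
        · exact Or.inr (Or.inl ⟨hx, h2⟩)
        · exact Or.inr (Or.inr ⟨hx, h1, h2⟩)
  rw [e] at hfin
  exact h.nocol _ hfin

lemma MC.cap4 {G : SimpleGraph V} {w : V → ℤ} {W : Finset V} (h : MC G w W) {T : Finset V}
    (hT : T ⊆ W) (hTW : T ≠ W) (hne : T.Nonempty) (y : V) : 1 ≤ pot G (cap w y 4) T := by
  by_cases h2 : 2 ≤ T.card
  · have := h.gap hT hTW h2
    have := pot_cap G w (y := y) 4 T (h.adm.1 y) (by norm_num)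
    linarith
  · obtain ⟨x, rfl⟩ : ∃ x, T = {x} := by
      apply Finset.card_eq_one.1
      have := hne.card_pos; omega
    have := h.adm.2 {x} hT hne
    rw [pot_singleton] at this ⊢
    by_cases hx : x = y
    · subst hx; rw [cap_self]; exact le_min this (by norm_num)
    · rw [cap_ne w 4 hx]; exact this

lemma MC.split {G : SimpleGraph V} {w : V → ℤ} {W W' : Finset V} (h : MC G w W) {u c y x : V}
    (hu : u ∈ W) (hwu : w u = 5) (hwc : w c = 5) (hcy : c ≠ y) (huc : G.Adj u c) (huy : G.Adj u y)
    (hc : ∀ z ∈ W, (G.Adj c z ↔ z = u ∨ z = x)) (hx : x ∈ W') (hW' : W' ⊆ W)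
    (huW' : u ∉ W') (hcW' : c ∈ W') (hyW' : y ∈ W') (hne : insert u W' ≠ W)
    (hu3 : ∀ z ∈ W', G.Adj u z → z = c ∨ z = y) :
    ∃ I, y ∉ I ∧ c ∉ I ∧ I ⊆ W' ∧ (Col G w (insert u W') I ∨
      (Col G w (W'.erase c) I ∧ x ∉ I ∧ (∀ q ∈ I, ¬ G.Adj x q) ∧ 3 ≤ w x ∧
        3 ≤ w y ∧ ∀ q ∈ I, ¬ G.Adj y q)) := by
  have hxc : G.Adj c x := (hc x (hW' hx)).2 (Or.inr rfl)
  have hlt : W'.card < W.card := Finset.card_lt_card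
    (Finset.ssubset_iff_subset_ne.2 ⟨hW', by intro hh; rw [hh] at huW'; exact huW' hu⟩)
  by_cases hxy : x = y
  · subst hxy
    have hb : ∀ T ⊆ W'.erase c, x ∈ T → 5 ≤ pot G w T := by
      intro T hT hxT
      have hcT : c ∉ T := fun hh => by simpa using hT hh
      have hTW : T ⊆ W' := hT.trans (Finset.erase_subset _ _)
      have huT : u ∉ insert c T := by
        simp only [Finset.mem_insert, not_or]
        exact ⟨huc.ne, fun hh => huW' (hTW hh)⟩
      have hs : insert u (insert c T) ⊆ insert u W' :=
        Finset.insert_subset_insert _ (Finset.insert_subset hcW' hTW)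
      have g := h.gap (S := insert u (insert c T))
        (hs.trans (Finset.insert_subset hu hW'))
        (by intro hh; exact hne ((Finset.insert_subset hu hW').antisymm (hh ▸ hs)))
        (by rw [Finset.card_insert_of_notMem huT, Finset.card_insert_of_notMem hcT]; omega)
      rw [pot_insert G w huT, pot_insert G w hcT] at g
      have n1 := nb_pos G hxT hxc
      have n2 := nb_two G (S := insert c T) (by simp) (Finset.mem_insert_of_mem hxT) hcy huc huy
      linarith
    obtain ⟨I, hI⟩ := h.ih G (cap w x 2) (W'.erase c)
      ((Finset.card_erase_le).trans_lt hlt) ⟨fun v => (cap_le _ _ _ _).trans (h.adm.1 v), by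
        intro T hT hTn
        by_cases hy : x ∈ T
        · have := hb T hT hy
          have := pot_cap G w (y := x) 2 T (h.adm.1 _) (by norm_num)
          linarith
        · rw [pot_cap_not G w 2 hy]
          exact h.adm.2 T (hT.trans ((Finset.erase_subset _ _).trans hW')) hTn⟩
    have hxe : x ∈ W'.erase c := Finset.mem_erase.2 ⟨hcy.symm, hx⟩
    have h1 := hI.cap_notMem (by norm_num)
    have h2 := hI.cap_clean hxe
    have h3 : 3 ≤ w x := by
      have := hb {x} (by simpa using hxe) (by simp)
      rw [pot_singleton] at this; linarith
    exact ⟨I, h1, fun hh => by simpa using hI.sub hh,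
      hI.sub.trans (Finset.erase_subset _ _), Or.inr ⟨hI.uncap, h1, h2, h3, h3, h2⟩⟩
  · have hyu : y ≠ u := huy.ne'
    have hncy : ¬ G.Adj c y := by
      rw [hc y (hW' hyW')]
      rintro (h1 | h1)
      · exact hyu h1
      · exact hxy h1.symm
    obtain ⟨I, hI⟩ := h.ih (addE G c y) (cap w y 4) W' hlt
      ⟨fun v => (cap_le _ _ _ _).trans (h.adm.1 v), by
        intro T hT hTn
        by_cases hb : c ∈ T ∧ y ∈ T
        · rw [pot_addE G _ hcy hncy hb.1 hb.2]
          have huT : u ∉ T := fun hh => huW' (hT hh)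
          have hs : insert u T ⊆ insert u W' := Finset.insert_subset_insert _ hT
          have g := h.gap (S := insert u T)
            (hs.trans (Finset.insert_subset hu hW'))
            (by intro hh; exact hne ((Finset.insert_subset hu hW').antisymm (hh ▸ hs)))
            (by
              rw [Finset.card_insert_of_notMem huT]
              have := hTn.card_pos
              omega)
          rw [pot_insert G w huT] at g
          have n2 := nb_two G hb.1 hb.2 hcy huc huy
          have := pot_cap G w (y := y) 4 T (h.adm.1 _) (by norm_num)
          linarith
        · rw [pot_addE_not G _ hcy hb]
          exact h.cap4 (hT.trans hW') (by rintro rfl; exact huW' (hT hu)) hTn y⟩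
    have hyI := hI.cap_notMem (by norm_num)
    have hI' := hI.uncap
    by_cases hcI : c ∈ I
    · have key : ∀ z ∈ W', (addE G c y).Adj z c → ∀ q ∈ I.erase c, ¬ G.Adj z q := by
        intro z hz hzc q hq hzq
        have := hI'.dist z hz c hcI q (Finset.erase_subset _ _ hq) hzc
          ((addE_adj G hcy _ _).2 (Or.inl hzq))
        exact (Finset.mem_erase.1 hq).1 this.symm
      have ax : (addE G c y).Adj x c := (addE_adj G hcy _ _).2 (Or.inl hxc.symm)
      have ay : (addE G c y).Adj y c := (addE_adj G hcy _ _).2 (by simp)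
      refine ⟨I.erase c, fun hh => hyI (Finset.erase_subset _ _ hh), by simp,
        (Finset.erase_subset _ _).trans hI.sub, Or.inr ⟨?_, ?_, key x hx ax, ?_, ?_,
          key y hyW' ay⟩⟩
      · have := (hI'.unE hcy).restrict (Finset.erase_subset c W')
        convert this using 1
        ext z
        simp only [Finset.mem_erase, Finset.mem_inter]
        constructor
        · rintro ⟨h3, h4⟩; exact ⟨h4, h3, hI.sub h4⟩
        · rintro ⟨h3, h4, _⟩; exact ⟨h4, h3⟩
      · intro hh
        exact hI'.ind x (Finset.erase_subset _ _ hh) c hcI ax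
      · exact hI'.adjT c hcI x hx ax.symm
      · exact hI'.adjT c hcI y hyW' ay.symm
    · exact ⟨I, hyI, hcI, hI.sub, Or.inl (hI'.subdiv hcy hncy huW' hcI hyI hu3)⟩

lemma MC.cut' {G : SimpleGraph V} {w : V → ℤ} {W : Finset V} {x0 y0 : V}
    (h : MC G w W) (X : Finset V) (hX : X ⊆ W)
    (hx0 : x0 ∈ X) (hy0 : y0 ∈ W) (hy : y0 ∉ X)
    (he : ∀ x ∈ X, ∀ y ∈ W, y ∉ X → G.Adj x y → x = x0 ∧ y = y0) : False := by
  refine h.cut (X := X) (Y := W \ X) (x0 := x0) (y0 := y0) ?_ Finset.disjoint_sdiff hx0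
    (Finset.mem_sdiff.2 ⟨hy0, hy⟩) ?_
  · exact (Finset.union_sdiff_of_subset hX).symm
  · intro x hx y hy
    exact he x hx y (Finset.mem_sdiff.1 hy).1 (Finset.mem_sdiff.1 hy).2

lemma MC.R2 {G : SimpleGraph V} {w : V → ℤ} {W : Finset V} (h : MC G w W) {v a b c y z x : V}
    (hv : v ∈ W) (ha : a ∈ W) (hb : b ∈ W) (hc : c ∈ W) (hy : y ∈ W) (hz : z ∈ W) (hx : x ∈ W)
    (wv : w v = 5) (wa : w a = 5) (wb : w b = 5) (wc : w c = 5)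
    (hac : a ≠ c) (hay : a ≠ y) (hcy : c ≠ y) (hbv : b ≠ v) (hza : z ≠ a) (hxv : x ≠ v)
    (nv : ∀ u ∈ W, (G.Adj v u ↔ u = a ∨ u = c ∨ u = y))
    (na : ∀ u ∈ W, (G.Adj a u ↔ u = v ∨ u = b))
    (nb' : ∀ u ∈ W, (G.Adj b u ↔ u = a ∨ u = z))
    (nc : ∀ u ∈ W, (G.Adj c u ↔ u = v ∨ u = x)) : False := by
  have hva : G.Adj v a := (nv a ha).2 (by simp)
  have hvc : G.Adj v c := (nv c hc).2 (by simp)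
  have hvy : G.Adj v y := (nv y hy).2 (by simp)
  have hab : G.Adj a b := (na b hb).2 (by simp)
  have hbz : G.Adj b z := (nb' z hz).2 (by simp)
  have hcx : G.Adj c x := (nc x hx).2 (by simp)
  have nevy := hvy.ne
  have nevc := hvc.ne
  have neva := hva.ne
  have neab := hab.ne
  have nebz := hbz.ne
  have necx := hcx.ne
  have hbc : b ≠ c := by
    rintro rfl
    refine h.cut' (x0 := v) (y0 := y) {v, a, b} ?_ (by simp) hy ?_ ?_
    · grind
    · simp; grind [SimpleGraph.Adj.ne]
    · intro p hp q hq hq2 hpq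
      grind
  have hby : b ≠ y := by
    rintro rfl
    refine h.cut' (x0 := v) (y0 := c) {v, a, b} ?_ (by simp) hc ?_ ?_
    · grind
    · simp; grind [SimpleGraph.Adj.ne]
    · intro p hp q hq hq2 hpq
      grind [SimpleGraph.Adj.symm]
  have hxb : x ≠ b := by
    rintro rfl
    refine h.cut' (x0 := v) (y0 := y) {v, a, x, c} ?_ (by simp) hy ?_ ?_
    · grind
    · simp; grind [SimpleGraph.Adj.ne]
    · intro p hp q hq hq2 hpq
      grind [SimpleGraph.Adj.symm]
  have hxa : x ≠ a := by
    rintro rfl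
    grind [SimpleGraph.Adj.symm]
  have hzv : z ≠ v := by
    rintro rfl
    grind [SimpleGraph.Adj.symm]
  have hzc : z ≠ c := by
    rintro rfl
    grind [SimpleGraph.Adj.symm]
  set W' := W \ {v, a, b} with hW'
  have mW' : ∀ t, t ∈ W' ↔ t ∈ W ∧ t ≠ v ∧ t ≠ a ∧ t ≠ b := by
    intro t; simp [hW']
  clear_value W'
  obtain ⟨I, hyI, hcI, hIW, hI | ⟨hI, hxI, hxI2, wx, wy, hyI2⟩⟩ :=
    h.split (W' := W') hv wv wc hcy hvc hvy nc (by grind) (by grind) (by grind) (by grind)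
      (by grind) (by grind) (by grind)
  · by_cases hzI : z ∈ I
    · have h1 := hI.addF_leaf (v := a) (p := v) (by grind) (by linarith) (by grind)
      have h2 := h1.addF_two (v := b) (p := z) (q := a) (by grind) (by linarith) hzI (by grind)
        (by grind)
      exact h.nocol I (by convert h2 using 1; grind)
    · have h1 := hI.addF_leaf (v := b) (p := z) (by grind) (by linarith) (by grind)
      have h2 := h1.addI (v := a) (by grind) (by linarith) (by
        intro p hp hap
        have hpW : p ∈ W := by grind
        rcases (na p hpW).1 hap with rfl | rfl
        · refine ⟨by grind, by linarith, ?_⟩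
          intro q hq hvq
          grind
        · refine ⟨by grind, by linarith, ?_⟩
          intro q hq hvq
          grind)
      exact h.nocol _ (by convert h2 using 1; grind)
  · have h1 := hI.addF_leaf (v := c) (p := x) (by grind) (by linarith) (by grind)
    have h2 := h1.addF_leaf (v := b) (p := z) (by grind) (by linarith) (by grind)
    have h3 := h2.addI (v := v) (by grind) (by linarith) (by
        intro p hp hap
        have hpW : p ∈ W := by grind
        rcases (nv p hpW).1 hap with rfl | rfl | rfl
        · grind
        · refine ⟨by grind, by linarith, ?_⟩
          intro q hq hvq
          grind
        · exact ⟨hyI, wy, hyI2⟩)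
    have h4 := h3.addF_two (v := a) (p := v) (q := b) (by grind) (by linarith) (by simp) (by grind)
        (by grind)
    exact h.nocol _ (by convert h4 using 1; grind)

set_option maxHeartbeats 1000000 in
lemma MC.R3 {G : SimpleGraph V} {w : V → ℤ} {W : Finset V} (h : MC G w W)
    {v c1 c2 e u c3 y x w1 w2 : V}
    (hv : v ∈ W) (hc1 : c1 ∈ W) (hc2 : c2 ∈ W) (he : e ∈ W) (hu : u ∈ W) (hc3 : c3 ∈ W)
    (hy : y ∈ W) (hx : x ∈ W) (hw1 : w1 ∈ W) (hw2 : w2 ∈ W)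
    (wv : w v = 5) (wc1 : w c1 = 5) (wc2 : w c2 = 5) (wee : w e = 5) (wu : w u = 5) (wc3 : w c3 = 5)
    (d12 : c1 ≠ c2) (d1e : c1 ≠ e) (d2e : c2 ≠ e) (hec3 : e ≠ c3) (hey : e ≠ y) (hc3y : c3 ≠ y)
    (hw1v : w1 ≠ v) (hw2v : w2 ≠ v) (huv : u ≠ v) (hxu : x ≠ u)
    (hw12 : w1 ≠ w2) (hw1u : w1 ≠ u) (hw2u : w2 ≠ u) (hw13 : w1 ≠ c3) (hw23 : w2 ≠ c3)
    (hw1c : w1 ≠ c2) (hw2c : w2 ≠ c1) (huc1 : u ≠ c1) (huc2 : u ≠ c2)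
    (nv : ∀ t ∈ W, (G.Adj v t ↔ t = c1 ∨ t = c2 ∨ t = e))
    (n1 : ∀ t ∈ W, (G.Adj c1 t ↔ t = v ∨ t = w1))
    (n2 : ∀ t ∈ W, (G.Adj c2 t ↔ t = v ∨ t = w2))
    (ne : ∀ t ∈ W, (G.Adj e t ↔ t = v ∨ t = u))
    (nu : ∀ t ∈ W, (G.Adj u t ↔ t = e ∨ t = c3 ∨ t = y))
    (n3 : ∀ t ∈ W, (G.Adj c3 t ↔ t = u ∨ t = x)) : False := by
  have hv1 : G.Adj v c1 := (nv c1 hc1).2 (by simp)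
  have hv2 : G.Adj v c2 := (nv c2 hc2).2 (by simp)
  have hve : G.Adj v e := (nv e he).2 (by simp)
  have h1w : G.Adj c1 w1 := (n1 w1 hw1).2 (by simp)
  have h2w : G.Adj c2 w2 := (n2 w2 hw2).2 (by simp)
  have heu : G.Adj e u := (ne u hu).2 (by simp)
  have hu3 : G.Adj u c3 := (nu c3 hc3).2 (by simp)
  have huy : G.Adj u y := (nu y hy).2 (by simp)
  have h3x : G.Adj c3 x := (n3 x hx).2 (by simp)
  have d1 := hv1.ne
  have d2 := hv2.ne
  have d3 := hve.ne
  have d4 := h1w.ne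
  have d5 := h2w.ne
  have d6 := heu.ne
  have d7 := hu3.ne
  have d8 := huy.ne
  have d9 := h3x.ne
  have sym : ∀ p q, G.Adj p q → G.Adj q p := fun _ _ hh => hh.symm
  have hc3v : c3 ≠ v := by rintro rfl; grind
  have hyv : y ≠ v := by rintro rfl; grind
  have hc31 : c3 ≠ c1 := by rintro rfl; grind
  have hc32 : c3 ≠ c2 := by rintro rfl; grind
  have hy1 : y ≠ c1 := by rintro rfl; grind
  have hy2 : y ≠ c2 := by rintro rfl; grind
  have hxv : x ≠ v := by rintro rfl; grind
  have hx1 : x ≠ c1 := by rintro rfl; grind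
  have hx2 : x ≠ c2 := by rintro rfl; grind
  have hxe : x ≠ e := by rintro rfl; grind
  have hw1e : w1 ≠ e := by rintro rfl; grind
  have hw2e : w2 ≠ e := by rintro rfl; grind
  set W' := W \ {v, c1, c2, e, u} with hW'
  have mW' : ∀ t, t ∈ W' ↔ t ∈ W ∧ t ≠ v ∧ t ≠ c1 ∧ t ≠ c2 ∧ t ≠ e ∧ t ≠ u := by
    intro t; simp [hW']
  clear_value W'
  clear hW'
  have cov : ∀ t, t ∈ W ↔ (t = v ∨ t = c1 ∨ t = c2 ∨ t = e ∨ t = u ∨ t ∈ W') := by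
    intro t; rw [mW']
    constructor
    · intro ht; tauto
    · rintro (rfl | rfl | rfl | rfl | rfl | hh)
      all_goals first | assumption | exact hh.1
  -- finishing with `v` in the independent set
  have fin1 : ∀ I : Finset V, Col G w (insert u W') I → u ∉ I → w1 ∉ I → w2 ∉ I → False := by
    intro I hI huI hw1I hw2I
    have hIs := hI.sub
    have k1 := hI.addF_leaf (v := c1) (p := w1) (by grind) (by linarith) (by grind)
    have k2 := k1.addF_leaf (v := c2) (p := w2) (by grind) (by linarith) (by grind)
    have k3 := k2.addF_leaf (v := e) (p := u) (by grind) (by linarith) (by grind)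
    have k4 := k3.addI (v := v) (by grind) (by linarith) (by
      intro p hp hap
      have hpW : p ∈ W := by grind
      rcases (nv p hpW).1 hap with rfl | rfl | rfl
      · refine ⟨by grind, by linarith, ?_⟩
        intro q hq hvq
        grind
      · refine ⟨by grind, by linarith, ?_⟩
        intro q hq hvq
        grind
      · refine ⟨by grind, by linarith, ?_⟩
        intro q hq hvq
        grind)
    exact h.nocol _ (by convert k4 using 1; ext t; simp only [Finset.mem_insert]; rw [cov]; tauto)
  -- finishing with `v` in the forest
  have fin2 : ∀ I J : Finset V, ∀ {a b wa wb : V}, (a = c1 ∧ b = c2 ∧ wa = w1 ∧ wb = w2) ∨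
      (a = c2 ∧ b = c1 ∧ wa = w2 ∧ wb = w1) → Col G w (insert u W') I → u ∉ I → c3 ∉ I → y ∉ I →
      wa ∈ I → False := by
    intro I J a b wa wb hab hI huI hc3I hyI hwI
    have hIs := hI.sub
    have k0 := hI.addI (v := e) (by grind) (by linarith) (by
      intro p hp hap
      have hpW : p ∈ W := by grind
      have : p = u := by grind
      subst this
      refine ⟨huI, by linarith, ?_⟩
      intro q hq hvq
      grind)
    have k1 := k0.addF_leaf (v := b) (p := wb) (by grind) (by grind) (by grind)
    have k2 := k1.addF_two (v := v) (p := e) (q := b) (by grind) (by grind) (by grind) (by grind)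
      (by grind)
    have k3 := k2.addF_two (v := a) (p := wa) (q := v) (by grind) (by grind) (by grind) (by grind)
      (by grind)
    refine h.nocol _ (by
      convert k3 using 1; ext t; simp only [Finset.mem_insert]; rw [cov]
      clear * - hab
      rcases hab with ⟨rfl, rfl, rfl, rfl⟩ | ⟨rfl, rfl, rfl, rfl⟩ <;> tauto)
  have fin3 : ∀ I J : Finset V, ∀ {a b wa wb : V}, (a = c1 ∧ b = c2 ∧ wa = w1 ∧ wb = w2) ∨
      (a = c2 ∧ b = c1 ∧ wa = w2 ∧ wb = w1) → Col G w (insert u W') I → u ∈ I →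
      wa ∈ I → False := by
    intro I J a b wa wb hab hI huI hwI
    have hIs := hI.sub
    have k1 := hI.addF_leaf (v := b) (p := wb) (by grind) (by grind) (by grind)
    have k2 := k1.addF_leaf (v := v) (p := b) (by grind) (by grind) (by grind)
    have k3 := k2.addF_two (v := a) (p := wa) (q := v) (by grind) (by grind) (by grind) (by grind)
      (by grind)
    have k4 := k3.addF_two (v := e) (p := u) (q := v) (by grind) (by grind) (by grind) (by grind)
      (by grind)
    refine h.nocol _ (by
      convert k4 using 1; ext t; simp only [Finset.mem_insert]; rw [cov]
      clear * - hab
      rcases hab with ⟨rfl, rfl, rfl, rfl⟩ | ⟨rfl, rfl, rfl, rfl⟩ <;> tauto)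
  obtain ⟨I, hyI, hcI, hIW, hI | ⟨hI, hxI, hxI2, wx, wy, hyI2⟩⟩ :=
    h.split (W' := W') hu wu wc3 hc3y hu3 huy n3 (by grind) (by grind) (by grind) (by grind)
      (by grind) (by grind) (by grind)
  · by_cases hw1I : w1 ∈ I
    · exact fin2 I ∅ (Or.inl ⟨rfl, rfl, rfl, rfl⟩) hI (by grind) hcI hyI hw1I
    by_cases hw2I : w2 ∈ I
    · exact fin2 I ∅ (Or.inr ⟨rfl, rfl, rfl, rfl⟩) hI (by grind) hcI hyI hw2I
    exact fin1 I hI (by grind) hw1I hw2I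
  · have ee : insert c3 (W'.erase c3) = W' := Finset.insert_erase (by grind)
    have hor : (w1 ∉ I ∧ w2 ∉ I) ∨ (w1 ∈ I ∨ w2 ∈ I) := by tauto
    rcases hor with ⟨hw1I, hw2I⟩ | hor
    · have k1 := hI.addI (v := c3) (by grind) (by linarith) (by
        intro p hp hap
        have : p = x := by grind
        subst this
        exact ⟨hxI, wx, hxI2⟩)
      rw [ee] at k1
      have k2 := k1.addF_two (v := u) (p := c3) (q := y) (by grind) (by linarith) (by simp)
        (by grind) (by grind)
      exact fin1 _ k2 (by grind) (by grind) (by grind)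
    · have k1 := hI.addF_leaf (v := c3) (p := x) (by grind) (by linarith) (by grind)
      rw [ee] at k1
      have k2 := k1.addI (v := u) (by grind) (by linarith) (by
        intro p hp hap
        have hpW : p ∈ W := by grind
        have : p = c3 ∨ p = y := by grind
        rcases this with rfl | rfl
        · refine ⟨by grind, by linarith, ?_⟩
          intro q hq hvq
          grind
        · exact ⟨hyI, wy, hyI2⟩)
      rcases hor with hwI | hwI
      · exact fin3 _ ∅ (Or.inl ⟨rfl, rfl, rfl, rfl⟩) k2 (by simp) (by simp [hwI])
      · exact fin3 _ ∅ (Or.inr ⟨rfl, rfl, rfl, rfl⟩) k2 (by simp) (by simp [hwI])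

lemma MC.R4 {G : SimpleGraph V} {w : V → ℤ} {W : Finset V} (h : MC G w W) {f c y x : V}
    (hf : f ∈ W) (hc : c ∈ W) (hy : y ∈ W) (hx : x ∈ W)
    (wf3 : 3 ≤ w f) (wf4 : w f ≤ 4) (wc : w c = 5) (hcy : c ≠ y) (hxf : x ≠ f)
    (nf : ∀ u ∈ W, (G.Adj f u ↔ u = c ∨ u = y))
    (nc : ∀ u ∈ W, (G.Adj c u ↔ u = f ∨ u = x)) : False := by
  have hfc : G.Adj f c := (nf c hc).2 (by simp)
  have hfy : G.Adj f y := (nf y hy).2 (by simp)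
  have hcx : G.Adj c x := (nc x hx).2 (by simp)
  have d1 := hfc.ne
  have d2 := hfy.ne
  have d3 := hcx.ne
  by_cases hxy : x = y
  · subst hxy
    set W' := (W.erase f).erase c with hW'
    have mW' : ∀ t, t ∈ W' ↔ t ∈ W ∧ t ≠ f ∧ t ≠ c := by
      intro t; simp only [hW', Finset.mem_erase]; tauto
    have cov : ∀ t, t ∈ W ↔ (t = f ∨ t = c ∨ t ∈ W') := by
      intro t; rw [mW']
      constructor
      · intro ht; tauto
      · rintro (rfl | rfl | hh)
        all_goals first | assumption | exact hh.1
    have hsub : W' ⊆ W := fun t ht => ((mW' t).1 ht).1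
    have hlt : W'.card < W.card := Finset.card_lt_card
      (Finset.ssubset_iff_subset_ne.2 ⟨hsub, by
        intro hh; have := (mW' f).1 (hh ▸ hf); exact this.2.1 rfl⟩)
    have hxW' : x ∈ W' := (mW' x).2 ⟨hx, hxf, hcy.symm⟩
    have hb : ∀ T ⊆ W', x ∈ T → 4 ≤ pot G w T := by
      intro T hT hxT
      have hfT : f ∉ T := fun hh => ((mW' f).1 (hT hh)).2.1 rfl
      have hcT : c ∉ insert f T := by
        simp only [Finset.mem_insert, not_or]
        exact ⟨d1.symm, fun hh => ((mW' c).1 (hT hh)).2.2 rfl⟩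
      have g := h.adm.2 (insert c (insert f T))
        (Finset.insert_subset hc (Finset.insert_subset hf (hT.trans hsub))) ⟨c, by simp⟩
      rw [pot_insert G w hcT, pot_insert G w hfT] at g
      have n1 := nb_pos G hxT hfy
      have n2 := nb_two G (S := insert f T) (by simp) (Finset.mem_insert_of_mem hxT) hxf.symm
        hfc.symm hcx
      linarith
    obtain ⟨I, hI⟩ := h.ih G (cap w x 2) W' hlt ⟨fun v => (cap_le _ _ _ _).trans (h.adm.1 v), by
        intro T hT hTn
        by_cases hy : x ∈ T
        · have := hb T hT hy
          have := pot_cap G w (y := x) 2 T (h.adm.1 _) (by norm_num)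
          linarith
        · rw [pot_cap_not G w 2 hy]
          exact h.adm.2 T (hT.trans hsub) hTn⟩
    have h1 := hI.cap_notMem (by norm_num)
    have h2 := hI.cap_clean hxW'
    have h3 : 3 ≤ w x := by
      have := hb {x} (by simpa using hxW') (by simp)
      rw [pot_singleton] at this; linarith
    have hIs := hI.sub
    clear_value W'
    have k1 := hI.uncap.addF_leaf (v := f) (p := x) (by grind) (by linarith) (by grind)
    have k2 := k1.addI (v := c) (by grind) (by linarith) (by
      intro p hp hap
      have hpW : p ∈ W := by grind
      rcases (nc p hpW).1 hap with rfl | rfl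
      · refine ⟨by grind, by linarith, ?_⟩
        intro q hq hvq
        grind
      · exact ⟨h1, h3, h2⟩)
    exact h.nocol _ (by
      convert k2 using 1; ext t; simp only [Finset.mem_insert]; have := cov t; tauto)
  · have hncy : ¬ G.Adj c y := by
      rw [nc y hy]
      rintro (h1 | h1)
      · exact d2 h1.symm
      · exact hxy h1.symm
    have hfW : f ∉ W.erase f := by simp
    have hlt : (W.erase f).card < W.card := Finset.card_erase_lt_of_mem hf
    obtain ⟨I, hI⟩ := h.ih (addE G c y) w (W.erase f) hlt ⟨h.adm.1, by
      intro T hT hTn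
      have hTW := hT.trans (Finset.erase_subset _ _)
      by_cases hb : c ∈ T ∧ y ∈ T
      · rw [pot_addE G _ hcy hncy hb.1 hb.2]
        have hfT : f ∉ T := fun hh => hfW (hT hh)
        have g := h.adm.2 (insert f T) (Finset.insert_subset hf hTW) ⟨f, by simp⟩
        rw [pot_insert G w hfT] at g
        have n2 := nb_two G hb.1 hb.2 hcy hfc hfy
        linarith
      · rw [pot_addE_not G _ hcy hb]
        exact h.adm.2 T hTW hTn⟩
    have hnf : ∀ u ∈ W.erase f, G.Adj f u → u = c ∨ u = y := fun u hu =>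
      (nf u (Finset.mem_erase.1 hu).2).1
    have acy : (addE G c y).Adj c y := (addE_adj G hcy _ _).2 (by simp)
    have hfin : Col G w (insert f (W.erase f)) I := by
      by_cases hcI : c ∈ I
      · have hyI : y ∉ I := fun hh => hI.ind c hcI y hh acy
        exact (hI.unE hcy).addF_two hfW wf3 hcI hyI hnf
      · by_cases hyI : y ∈ I
        · exact (hI.unE hcy).addF_two hfW wf3 hyI hcI fun u hu ha => (hnf u hu ha).symm
        · exact hI.subdiv hcy hncy hfW hcI hyI hnf
    rw [Finset.insert_erase hf] at hfin
    exact h.nocol _ hfin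

set_option maxHeartbeats 1000000 in
lemma MC.R5 {G : SimpleGraph V} {w : V → ℤ} {W : Finset V} (h : MC G w W)
    {f b a z c2 x2 c3 x3 : V}
    (hf : f ∈ W) (hb : b ∈ W) (ha : a ∈ W) (hz : z ∈ W) (hc2 : c2 ∈ W) (hx2 : x2 ∈ W)
    (hc3 : c3 ∈ W) (hx3 : x3 ∈ W)
    (wf3 : 3 ≤ w f) (wf4 : w f ≤ 4) (wb : w b = 5) (wa : w a = 5) (wc2 : w c2 = 5) (wc3 : w c3 = 5)
    (hb2 : b ≠ c2) (hb3 : b ≠ c3) (h23 : c2 ≠ c3) (haf : a ≠ f) (hzb : z ≠ b) (hx2f : x2 ≠ f)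
    (hx3f : x3 ≠ f)
    (nf : ∀ u ∈ W, (G.Adj f u ↔ u = b ∨ u = c2 ∨ u = c3))
    (nb' : ∀ u ∈ W, (G.Adj b u ↔ u = f ∨ u = a))
    (na : ∀ u ∈ W, (G.Adj a u ↔ u = b ∨ u = z))
    (n2 : ∀ u ∈ W, (G.Adj c2 u ↔ u = f ∨ u = x2))
    (n3 : ∀ u ∈ W, (G.Adj c3 u ↔ u = f ∨ u = x3)) : False := by
  have hfb : G.Adj f b := (nf b hb).2 (by simp)
  have hf2 : G.Adj f c2 := (nf c2 hc2).2 (by simp)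
  have hf3 : G.Adj f c3 := (nf c3 hc3).2 (by simp)
  have hba : G.Adj b a := (nb' a ha).2 (by simp)
  have haz : G.Adj a z := (na z hz).2 (by simp)
  have h2x : G.Adj c2 x2 := (n2 x2 hx2).2 (by simp)
  have h3x : G.Adj c3 x3 := (n3 x3 hx3).2 (by simp)
  have d1 := hfb.ne
  have d2 := hf2.ne
  have d3 := hf3.ne
  have d4 := hba.ne
  have d5 := haz.ne
  have d6 := h2x.ne
  have d7 := h3x.ne
  have sym : ∀ p q, G.Adj p q → G.Adj q p := fun _ _ hh => hh.symm
  have ha2 : a ≠ c2 := by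
    rintro rfl
    refine h.cut' (x0 := f) (y0 := c3) {f, b, a} ?_ (by simp) hc3 ?_ ?_
    · grind
    · simp; grind
    · intro p hp q hq hq2 hpq
      grind
  have ha3 : a ≠ c3 := by
    rintro rfl
    refine h.cut' (x0 := f) (y0 := c2) {f, b, a} ?_ (by simp) hc2 ?_ ?_
    · grind
    · simp; grind
    · intro p hp q hq hq2 hpq
      grind
  have hx3a : x3 ≠ a := by
    rintro rfl
    refine h.cut' (x0 := f) (y0 := c2) {f, b, x3, c3} ?_ (by simp) hc2 ?_ ?_
    · grind
    · simp; grind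
    · intro p hp q hq hq2 hpq
      grind
  have hx32 : x3 ≠ c2 := by
    rintro rfl
    refine h.cut' (x0 := f) (y0 := b) {f, x3, c3} ?_ (by simp) hb ?_ ?_
    · grind
    · simp; grind
    · intro p hp q hq hq2 hpq
      grind
  have hx3b : x3 ≠ b := by rintro rfl; grind
  have hnfx : ¬ G.Adj f x3 := by rw [nf x3 hx3]; tauto
  set W' := W \ {b, a, c3} with hW'
  have mW' : ∀ t, t ∈ W' ↔ t ∈ W ∧ t ≠ b ∧ t ≠ a ∧ t ≠ c3 := by
    intro t; simp [hW']
  clear_value W'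
  clear hW'
  have cov : ∀ t, t ∈ W ↔ (t = b ∨ t = a ∨ t = c3 ∨ t ∈ W') := by
    intro t; rw [mW']
    constructor
    · intro ht; tauto
    · rintro (rfl | rfl | rfl | hh)
      all_goals first | assumption | exact hh.1
  have hsub : W' ⊆ W := fun t ht => ((mW' t).1 ht).1
  have hbW' : b ∉ W' := fun hh => ((mW' b).1 hh).2.1 rfl
  have hc3W' : c3 ∉ W' := fun hh => ((mW' c3).1 hh).2.2.2 rfl
  have hlt : W'.card < W.card := Finset.card_lt_card
      (Finset.ssubset_iff_subset_ne.2 ⟨hsub, by intro hh; rw [hh] at hbW'; exact hbW' hb⟩)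
  obtain ⟨I, hI⟩ := h.ih (addE G f x3) (cap w c2 4) W' hlt
    ⟨fun v => (cap_le _ _ _ _).trans (h.adm.1 v), by
      intro T hT hTn
      by_cases hbb : f ∈ T ∧ x3 ∈ T
      · rw [pot_addE G _ hx3f.symm hnfx hbb.1 hbb.2]
        have hcT : c3 ∉ T := fun hh => hc3W' (hT hh)
        have g := h.gap (S := insert c3 T) (Finset.insert_subset hc3 (hT.trans hsub))
          (by
            intro hh
            have hbT : b ∈ insert c3 T := by rw [hh]; exact hb
            rcases Finset.mem_insert.1 hbT with h1 | h1
            · exact hb3 h1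
            · exact hbW' (hT h1))
          (by
            rw [Finset.card_insert_of_notMem hcT]
            have := hTn.card_pos
            omega)
        rw [pot_insert G w hcT] at g
        have n2 := nb_two G hbb.1 hbb.2 hx3f.symm hf3.symm h3x
        have := pot_cap G w (y := c2) 4 T (h.adm.1 _) (by norm_num)
        linarith
      · rw [pot_addE_not G _ hx3f.symm hbb]
        exact h.cap4 (hT.trans hsub) (by rintro rfl; exact hbW' (hT hb)) hTn c2⟩
  have hc2I := hI.cap_notMem (by norm_num)
  have hI' := hI.uncap
  have hfI : f ∉ I := by intro hh; have := hI'.typ f hh; linarith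
  have hIs := hI.sub
  have hn3 : ∀ u ∈ W', G.Adj c3 u → u = f ∨ u = x3 := fun u hu => (n3 u (hsub hu)).1
  have k0 : Col G w (insert c3 W') I := by
    by_cases hxI : x3 ∈ I
    · exact (hI'.unE hx3f.symm).addF_two hc3W' (by linarith) hxI hfI
        fun u hu ha => (hn3 u hu ha).symm
    · exact hI'.subdiv hx3f.symm hnfx hc3W' hfI hxI hn3
  clear hI hI'
  by_cases hzI : z ∈ I
  · have k1 := k0.addF_leaf (v := b) (p := f) (by grind) (by linarith) (by grind)
    have k2 := k1.addF_two (v := a) (p := z) (q := b) (by grind) (by linarith) hzI (by grind)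
      (by grind)
    exact h.nocol _ (by
      convert k2 using 1; ext t; simp only [Finset.mem_insert]; have := cov t; tauto)
  · have k1 := k0.addF_leaf (v := a) (p := z) (by grind) (by linarith) (by grind)
    have k2 := k1.addI (v := b) (by grind) (by linarith) (by
      intro p hp hap
      have hpW : p ∈ W := by grind
      rcases (nb' p hpW).1 hap with rfl | rfl
      · refine ⟨hfI, wf3, ?_⟩
        intro q hq hvq
        grind
      · refine ⟨by grind, by linarith, ?_⟩
        intro q hq hvq
        grind)
    exact h.nocol _ (by
      convert k2 using 1; ext t; simp only [Finset.mem_insert]; have := cov t; tauto)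

/-- a vertex of weight five with exactly three neighbours, all of them of type `U2` -/
def Needy (G : SimpleGraph V) (w : V → ℤ) (W : Finset V) (v : V) : Prop :=
  v ∈ W ∧ w v = 5 ∧ nb G W v = 3 ∧ ∀ n ∈ W, G.Adj v n → U2 G w W n

/-- the charge given by `c` to `v` -/
noncomputable def give (G : SimpleGraph V) (w : V → ℤ) (W : Finset V) (c v : V) : ℤ :=
  if U2 G w W v then 0
  else if (∃ p ∈ W, p ≠ v ∧ G.Adj c p ∧ U2 G w W p) then 6
  else if Needy G w W v ∧ ¬ (∃ p ∈ W, p ≠ v ∧ G.Adj c p ∧ Needy G w W p) then 2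
  else if ¬ Needy G w W v ∧ (∃ p ∈ W, p ≠ v ∧ G.Adj c p ∧ Needy G w W p) then 4
  else 3

lemma Needy.not_U2 {G : SimpleGraph V} {w : V → ℤ} {W : Finset V} {v : V}
    (h : Needy G w W v) : ¬ U2 G w W v := by
  intro h2
  have := h.2.2.1
  rw [h2.2.2] at this
  omega

lemma give_eq {G : SimpleGraph V} {w : V → ℤ} {W : Finset V} {c v q : V}
    (hq : q ∈ W) (hqv : q ≠ v)
    (hc : ∀ u ∈ W, (G.Adj c u ↔ u = v ∨ u = q)) :
    give G w W c v = if U2 G w W v then 0 else if U2 G w W q then 6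
      else if Needy G w W v ∧ ¬ Needy G w W q then 2
      else if ¬ Needy G w W v ∧ Needy G w W q then 4 else 3 := by
  have key : ∀ P : V → Prop, (∃ p ∈ W, p ≠ v ∧ G.Adj c p ∧ P p) ↔ P q := by
    intro P
    constructor
    · rintro ⟨p, hp, hpv, ha, hP⟩
      rcases (hc p hp).1 ha with h | h
      · exact absurd h hpv
      · exact h ▸ hP
    · intro hP
      exact ⟨q, hq, hqv, (hc q hq).2 (Or.inr rfl), hP⟩
  unfold give
  simp only [key (U2 G w W), key (Needy G w W)]

lemma give_le {G : SimpleGraph V} {w : V → ℤ} {W : Finset V} (c v : V) :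
    give G w W c v ≤ 6 := by
  unfold give
  split_ifs <;> norm_num

lemma three_nbrs {G : SimpleGraph V} {W : Finset V} {v e : V} (hn : nb G W v = 3)
    (he : e ∈ W) (ha : G.Adj v e) :
    ∃ a ∈ W, ∃ b ∈ W, a ≠ b ∧ a ≠ e ∧ b ≠ e ∧ ∀ u ∈ W, (G.Adj v u ↔ u = a ∨ u = b ∨ u = e) := by
  have h1 : (W.filter (fun u => G.Adj v u)).card = 3 := nb_card (k := 3) (by exact_mod_cast hn)
  have hm : e ∈ W.filter (fun u => G.Adj v u) := by simp [he, ha]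
  have h2 : ((W.filter (fun u => G.Adj v u)).erase e).card = 2 := by
    rw [Finset.card_erase_of_mem hm, h1]
  obtain ⟨a, b, hab, hs⟩ := Finset.card_eq_two.1 h2
  have hs' : ∀ u, (u ≠ e ∧ u ∈ W ∧ G.Adj v u) ↔ (u = a ∨ u = b) := by
    intro u
    have := Finset.ext_iff.1 hs u
    simpa using this
  have h3 := (hs' a).2 (Or.inl rfl)
  have h4 := (hs' b).2 (Or.inr rfl)
  refine ⟨a, h3.2.1, b, h4.2.1, hab, h3.1, h4.1, ?_⟩
  intro u hu
  by_cases hue : u = e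
  · subst hue; simp [ha]
  · have := hs' u
    tauto

lemma MC.not_both {G : SimpleGraph V} {w : V → ℤ} {W : Finset V} (h : MC G w W) {c v q : V}
    (hc : U2 G w W c) (hv : U2 G w W v) (hq : U2 G w W q)
    (hn : ∀ u ∈ W, (G.Adj c u ↔ u = v ∨ u = q)) : False := by
  have av : G.Adj v c := ((hn v hv.1).2 (Or.inl rfl)).symm
  have aq : G.Adj q c := ((hn q hq.1).2 (Or.inr rfl)).symm
  obtain ⟨v', hv', hv'c, nv⟩ := hv.other hc.1 av
  obtain ⟨q', hq', hq'c, nq⟩ := hq.other hc.1 aq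
  refine h.R1 hc.1 hc.2.1 ?_ {v', q'} Finset.card_le_two ?_
  · intro n hnW ha
    rcases (hn n hnW).1 ha with rfl | rfl <;> assumption
  · intro n hnW ha m hm hmc hnm
    left
    rcases (hn n hnW).1 ha with rfl | rfl
    · have := (nv m hm).1 hnm
      grind
    · have := (nq m hm).1 hnm
      grind

lemma MC.give_sum {G : SimpleGraph V} {w : V → ℤ} {W : Finset V} (h : MC G w W) {c : V}
    (hc : U2 G w W c) : ∑ v ∈ W.filter (fun u => G.Adj c u), give G w W c v = 6 := by
  have h1 : (W.filter (fun u => G.Adj c u)).card = 2 :=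
    nb_card (k := 2) (by exact_mod_cast hc.2.2)
  obtain ⟨v, q, hvq, hs⟩ := Finset.card_eq_two.1 h1
  have hn : ∀ u, (u ∈ W ∧ G.Adj c u) ↔ (u = v ∨ u = q) := by
    intro u
    have := Finset.ext_iff.1 hs u
    simpa using this
  have hv := (hn v).2 (Or.inl rfl)
  have hq := (hn q).2 (Or.inr rfl)
  have n1 : ∀ u ∈ W, (G.Adj c u ↔ u = v ∨ u = q) := by
    intro u hu
    have := hn u
    tauto
  have n2 : ∀ u ∈ W, (G.Adj c u ↔ u = q ∨ u = v) := by
    intro u hu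
    have := hn u
    tauto
  rw [hs, Finset.sum_pair hvq, give_eq hq.1 hvq.symm n1, give_eq hv.1 hvq n2]
  have nb' := fun a b => h.not_both hc a b n1
  have l1 : Needy G w W v → ¬ U2 G w W v := Needy.not_U2
  have l2 : Needy G w W q → ¬ U2 G w W q := Needy.not_U2
  split_ifs <;> first | rfl | (exfalso; tauto)

lemma Needy.struct {G : SimpleGraph V} {w : V → ℤ} {W : Finset V} (h : MC G w W) {v e : V}
    (hv : Needy G w W v) (he : e ∈ W) (ha : G.Adj v e) :
    ∃ c1 c2 u w1 w2 : V, c1 ∈ W ∧ c2 ∈ W ∧ u ∈ W ∧ w1 ∈ W ∧ w2 ∈ W ∧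
      U2 G w W c1 ∧ U2 G w W c2 ∧ U2 G w W e ∧ c1 ≠ c2 ∧ c1 ≠ e ∧ c2 ≠ e ∧
      w1 ≠ v ∧ w2 ≠ v ∧ u ≠ v ∧ w1 ≠ w2 ∧ w1 ≠ u ∧ w2 ≠ u ∧
      ¬ U2 G w W w1 ∧ ¬ U2 G w W w2 ∧ ¬ U2 G w W u ∧
      (∀ t ∈ W, (G.Adj v t ↔ t = c1 ∨ t = c2 ∨ t = e)) ∧
      (∀ t ∈ W, (G.Adj c1 t ↔ t = v ∨ t = w1)) ∧
      (∀ t ∈ W, (G.Adj c2 t ↔ t = v ∨ t = w2)) ∧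
      (∀ t ∈ W, (G.Adj e t ↔ t = v ∨ t = u)) := by
  obtain ⟨c1, hc1, c2, hc2, d12, d1, d2, nv⟩ := three_nbrs hv.2.2.1 he ha
  have a1 := (nv c1 hc1).2 (by simp)
  have a2 := (nv c2 hc2).2 (by simp)
  have u1 := hv.2.2.2 c1 hc1 a1
  have u2 := hv.2.2.2 c2 hc2 a2
  have u3 := hv.2.2.2 e he ha
  obtain ⟨w1, hw1, hw1v, n1⟩ := u1.other hv.1 a1.symm
  obtain ⟨w2, hw2, hw2v, n2⟩ := u2.other hv.1 a2.symm
  obtain ⟨u, hu, huv, ne⟩ := u3.other hv.1 ha.symm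
  have key : ∀ P : Finset V, P.card ≤ 2 → (w1 ∈ P ∨ U2 G w W w1) → (w2 ∈ P ∨ U2 G w W w2) →
      (u ∈ P ∨ U2 G w W u) → False := by
    intro P hP p1 p2 p3
    refine h.R1 hv.1 hv.2.1 hv.2.2.2 P hP ?_
    intro n hn hvn m hm hmv hnm
    rcases (nv n hn).1 hvn with rfl | rfl | rfl
    · rcases (n1 m hm).1 hnm with rfl | rfl
      · exact absurd rfl hmv
      · exact p1
    · rcases (n2 m hm).1 hnm with rfl | rfl
      · exact absurd rfl hmv
      · exact p2
    · rcases (ne m hm).1 hnm with rfl | rfl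
      · exact absurd rfl hmv
      · exact p3
  refine ⟨c1, c2, u, w1, w2, hc1, hc2, hu, hw1, hw2, u1, u2, u3, d12, d1, d2, hw1v, hw2v, huv,
    ?_, ?_, ?_, ?_, ?_, ?_, nv, n1, n2, ne⟩
  · intro hh; exact key {w1, u} Finset.card_le_two (by simp) (by simp [hh]) (by simp)
  · intro hh; exact key {w1, w2} Finset.card_le_two (by simp) (by simp) (by simp [hh])
  · intro hh; exact key {w1, w2} Finset.card_le_two (by simp) (by simp) (by simp [hh])
  · intro hh; exact key {w2, u} Finset.card_le_two (by simp [hh]) (by simp) (by simp)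
  · intro hh; exact key {w1, u} Finset.card_le_two (by simp) (by simp [hh]) (by simp)
  · intro hh; exact key {w1, w2} Finset.card_le_two (by simp) (by simp) (by simp [hh])

lemma MC.no_needy {G : SimpleGraph V} {w : V → ℤ} {W : Finset V} (h : MC G w W) {v u e c : V}
    (hv : Needy G w W v) (hu : u ∈ W) (wu : w u = 5) (nu : nb G W u = 3)
    (he : e ∈ W) (hve : G.Adj v e) (hue : G.Adj u e) (huv : u ≠ v)
    (hc : U2 G w W c) (hec : c ≠ e) (huc : G.Adj u c) : False := by
  obtain ⟨c1, c2, u', w1, w2, hc1, hc2, hu', hw1, hw2, u1, u2, u3, d12, d1, d2, hw1v, hw2v, -,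
    h12, h1u, h2u, k1, k2, k3, nv, n1, n2, ne⟩ := hv.struct h he hve
  have : u = u' := by
    rcases (ne u hu).1 hue.symm with hh | hh
    · exact absurd hh huv
    · exact hh
  subst this
  obtain ⟨a, ha, b, hb, hab, hae, hbe, nn⟩ := three_nbrs nu he hue
  obtain ⟨x, hx, hxu, n3⟩ := hc.other hu huc.symm
  have main : ∀ y ∈ W, e ≠ y → c ≠ y → (∀ t ∈ W, (G.Adj u t ↔ t = e ∨ t = c ∨ t = y)) → False := by
    intro y hy hey hcy ny
    exact h.R3 (v := v) (c1 := c1) (c2 := c2) (e := e) (u := u) (c3 := c) (y := y) (x := x)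
      (w1 := w1) (w2 := w2) hv.1 hc1 hc2 he hu hc.1 hy hx hw1 hw2 hv.2.1 u1.2.1 u2.2.1 u3.2.1 wu
      hc.2.1 d12 d1 d2 hec.symm hey hcy hw1v hw2v huv hxu h12 h1u h2u
      (by rintro rfl; exact k1 hc) (by rintro rfl; exact k2 hc)
      (by rintro rfl; exact k1 u2) (by rintro rfl; exact k2 u1)
      (by rintro rfl; exact k3 u1) (by rintro rfl; exact k3 u2) nv n1 n2 ne ny n3
  rcases (nn c hc.1).1 huc with rfl | rfl | rfl
  · exact main b hb hbe.symm hab (by intro t ht; rw [nn t ht]; tauto)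
  · exact main a ha hae.symm hab.symm (by intro t ht; rw [nn t ht]; tauto)
  · exact hec rfl

/-- the charge received by `v` from its neighbour `c` -/
noncomputable def recv (G : SimpleGraph V) (w : V → ℤ) (W : Finset V) (v c : V) : ℤ :=
  if U2 G w W c then give G w W c v else 0

lemma recv_le {G : SimpleGraph V} {w : V → ℤ} {W : Finset V} (v c : V) :
    recv G w W v c ≤ 6 := by
  unfold recv
  split_ifs
  · exact give_le c v
  · norm_num

lemma recv_sum {G : SimpleGraph V} {w : V → ℤ} {W : Finset V} (v : V) :
    ∑ c ∈ W.filter (fun u => G.Adj v u), recv G w W v c ≤ 6 * nb G W v := by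
  have := Finset.sum_le_card_nsmul (W.filter (fun u => G.Adj v u)) (recv G w W v) 6
    (fun c _ => recv_le v c)
  unfold nb
  simp only [nsmul_eq_mul] at this
  linarith

/-- sum bound with one exceptional neighbour -/
lemma recv_sum_one {G : SimpleGraph V} {w : V → ℤ} {W : Finset V} {v e : V} (he : e ∈ W)
    (ha : G.Adj v e) (k m : ℤ) (hk : recv G w W v e ≤ k)
    (hm : ∀ c ∈ W, G.Adj v c → c ≠ e → recv G w W v c ≤ m) :
    ∑ c ∈ W.filter (fun u => G.Adj v u), recv G w W v c ≤ k + m * (nb G W v - 1) := by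
  have hme : e ∈ W.filter (fun u => G.Adj v u) := by simp [he, ha]
  rw [← Finset.add_sum_erase _ _ hme]
  have := Finset.sum_le_card_nsmul ((W.filter (fun u => G.Adj v u)).erase e) (recv G w W v) m
    (by
      intro c hc
      simp only [Finset.mem_erase, Finset.mem_filter] at hc
      exact hm c hc.2.1 hc.2.2 hc.1)
  have hc : ((((W.filter (fun u => G.Adj v u)).erase e).card : ℕ) : ℤ) = nb G W v - 1 := by
    unfold nb
    have := Finset.card_erase_add_one hme
    omega
  simp only [nsmul_eq_mul, hc] at this
  nlinarith

/-- an `U2` neighbour of a non-`U2` vertex -/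
lemma recv_eq {G : SimpleGraph V} {w : V → ℤ} {W : Finset V} {c v q : V}
    (hv : ¬ U2 G w W v) (hcU : U2 G w W c) (hq : q ∈ W) (hqv : q ≠ v)
    (hc : ∀ u ∈ W, (G.Adj c u ↔ u = v ∨ u = q)) :
    recv G w W v c = if U2 G w W q then 6
      else if Needy G w W v ∧ ¬ Needy G w W q then 2
      else if ¬ Needy G w W v ∧ Needy G w W q then 4 else 3 := by
  unfold recv
  rw [if_pos hcU, give_eq hq hqv hc, if_neg hv]

lemma recv_not {G : SimpleGraph V} {w : V → ℤ} {W : Finset V} {c v : V}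
    (hcU : ¬ U2 G w W c) : recv G w W v c = 0 := by
  unfold recv
  rw [if_neg hcU]

lemma recv_sum_nonU2 {G : SimpleGraph V} {w : V → ℤ} {W : Finset V} {v e : V} (he : e ∈ W)
    (ha : G.Adj v e) (hU : ¬ U2 G w W e) :
    ∑ c ∈ W.filter (fun u => G.Adj v u), recv G w W v c ≤ 6 * (nb G W v - 1) := by
  have := recv_sum_one he ha 0 6 (recv_not hU).le (fun c _ _ _ => recv_le v c)
  linarith

/-- weights three and four -/
lemma MC.bound34 {G : SimpleGraph V} {w : V → ℤ} {W : Finset V} (h : MC G w W) {v : V}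
    (hv : v ∈ W) (h3 : 3 ≤ w v) (h4 : w v ≤ 4) :
    6 * (w v - 2 * nb G W v) + ∑ c ∈ W.filter (fun u => G.Adj v u), recv G w W v c ≤ 0 := by
  have hvU : ¬ U2 G w W v := by
    intro hh; have := hh.2.1; omega
  have hvN : ¬ Needy G w W v := by
    intro hh; have := hh.2.1; omega
  have h2 := h.two_le hv
  have hs := recv_sum (G := G) (w := w) (W := W) v
  by_cases c4 : 4 ≤ nb G W v
  · linarith
  by_cases c2 : nb G W v = 2
  · have : ∑ c ∈ W.filter (fun u => G.Adj v u), recv G w W v c ≤ 0 := by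
      apply Finset.sum_nonpos
      intro c hc
      simp only [Finset.mem_filter] at hc
      by_cases hU : U2 G w W c
      · exfalso
        obtain ⟨x, hx, hxv, nc⟩ := hU.other hv hc.2.symm
        have k1 : (W.filter (fun u => G.Adj v u)).card = 2 :=
          nb_card (k := 2) (by exact_mod_cast c2)
        have hm : c ∈ W.filter (fun u => G.Adj v u) := by simp [hc]
        have k2 : ((W.filter (fun u => G.Adj v u)).erase c).card = 1 := by
          rw [Finset.card_erase_of_mem hm, k1]
        obtain ⟨y, hy⟩ := Finset.card_eq_one.1 k2
        have hy' : ∀ u, (u ≠ c ∧ u ∈ W ∧ G.Adj v u) ↔ u = y := by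
          intro u
          have := Finset.ext_iff.1 hy u
          simpa using this
        have hyy := (hy' y).2 rfl
        refine h.R4 (f := v) (c := c) (y := y) (x := x) hv hc.1 hyy.2.1 hx h3 h4 hU.2.1
          hyy.1.symm hxv ?_ nc
        intro u hu
        by_cases huc : u = c
        · subst huc; simp [hc.2]
        · have := hy' u
          tauto
      · exact (recv_not hU).le
    rw [c2]; linarith
  have c3 : nb G W v = 3 := by omega
  have goal12 : ∑ c ∈ W.filter (fun u => G.Adj v u), recv G w W v c ≤ 12 := by
    by_cases hall : ∀ n ∈ W, G.Adj v n → U2 G w W n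
    · have : ∀ c ∈ W.filter (fun u => G.Adj v u), recv G w W v c ≤ 4 := by
        intro c hc
        simp only [Finset.mem_filter] at hc
        have hU := hall c hc.1 hc.2
        obtain ⟨q, hq, hqv, nc⟩ := hU.other hv hc.2.symm
        rw [recv_eq hvU hU hq hqv nc]
        have hqU : ¬ U2 G w W q := by
          intro hqU
          have aqc : G.Adj q c := ((nc q hq).2 (Or.inr rfl)).symm
          obtain ⟨z, hz, hzc, nq⟩ := hqU.other hc.1 aqc
          obtain ⟨c2', hc2, c3', hc3, d23, d2, d3, nv⟩ := three_nbrs c3 hc.1 hc.2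
          have a2 := (nv c2' hc2).2 (by simp)
          have a3 := (nv c3' hc3).2 (by simp)
          have U2' := hall _ hc2 a2
          have U3' := hall _ hc3 a3
          obtain ⟨x2, hx2, hx2v, n2⟩ := U2'.other hv a2.symm
          obtain ⟨x3, hx3, hx3v, n3⟩ := U3'.other hv a3.symm
          exact h.R5 (f := v) (b := c) (a := q) (z := z) (c2 := c2') (x2 := x2) (c3 := c3')
            (x3 := x3) hv hc.1 hq hz hc2 hx2 hc3 hx3 h3 h4 hU.2.1 hqU.2.1 U2'.2.1 U3'.2.1
            d2.symm d3.symm d23 hqv hzc hx2v hx3v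
            (by intro t ht; rw [nv t ht]; tauto) nc nq n2 n3
        rw [if_neg hqU]
        split_ifs <;> norm_num
      have := Finset.sum_le_card_nsmul _ _ _ this
      have k1 : (W.filter (fun u => G.Adj v u)).card = 3 :=
        nb_card (k := 3) (by exact_mod_cast c3)
      rw [k1] at this
      simpa using this
    · push Not at hall
      obtain ⟨n, hn, hvn, hnU⟩ := hall
      have := recv_sum_nonU2 hn hvn hnU
      rw [c3] at this
      linarith
  rw [c3]; linarith

/-- weight five, four neighbours -/
lemma MC.bound5_4 {G : SimpleGraph V} {w : V → ℤ} {W : Finset V} (h : MC G w W) {v : V}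
    (hv : v ∈ W) (h5 : w v = 5) (h4 : nb G W v = 4) :
    ∑ c ∈ W.filter (fun u => G.Adj v u), recv G w W v c ≤ 18 := by
  have hvU : ¬ U2 G w W v := by
    intro hh; have := hh.2.2; omega
  have hvN : ¬ Needy G w W v := by
    intro hh; have := hh.2.2.1; omega
  by_cases hall : ∀ n ∈ W, G.Adj v n → U2 G w W n
  · by_cases hex : ∃ e ∈ W, G.Adj v e ∧ ∀ c ∈ W, G.Adj v c → c ≠ e → recv G w W v c ≤ 4
    · obtain ⟨e, he, hve, hc⟩ := hex
      have := recv_sum_one he hve 6 4 (recv_le v e) hc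
      rw [h4] at this
      linarith
    · exfalso
      push Not at hex
      have second : ∀ c ∈ W, G.Adj v c → 4 < recv G w W v c →
          ∀ m ∈ W, m ≠ v → G.Adj c m → U2 G w W m := by
        intro c hc hvc hr m hm hmv hcm
        have hU := hall c hc hvc
        obtain ⟨q, hq, hqv, nc⟩ := hU.other hv hvc.symm
        rw [recv_eq hvU hU hq hqv nc] at hr
        have : m = q := by
          rcases (nc m hm).1 hcm with hh | hh
          · exact absurd hh hmv
          · exact hh
        subst this
        by_contra hmU
        rw [if_neg hmU] at hr
        split_ifs at hr <;> omega
      have k1 : (W.filter (fun u => G.Adj v u)).card = 4 :=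
        nb_card (k := 4) (by exact_mod_cast h4)
      obtain ⟨e0, he0⟩ : (W.filter (fun u => G.Adj v u)).Nonempty := by
        rw [← Finset.card_pos, k1]; norm_num
      simp only [Finset.mem_filter] at he0
      obtain ⟨c1, hc1, hvc1, d1, r1⟩ := hex e0 he0.1 he0.2
      obtain ⟨c2, hc2, hvc2, d2, r2⟩ := hex c1 hc1 hvc1
      have m1 : c1 ∈ W.filter (fun u => G.Adj v u) := by simp [hc1, hvc1]
      have m2 : c2 ∈ (W.filter (fun u => G.Adj v u)).erase c1 := by simp [hc2, hvc2, d2]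
      have k2 : (((W.filter (fun u => G.Adj v u)).erase c1).erase c2).card = 2 := by
        rw [Finset.card_erase_of_mem m2, Finset.card_erase_of_mem m1, k1]
      have oth : ∀ c, ∃ q, c ∈ W → G.Adj v c → ∀ m ∈ W, m ≠ v → G.Adj c m → m = q := by
        intro c
        by_cases hc : c ∈ W ∧ G.Adj v c
        · obtain ⟨q, hq, hqv, nc⟩ := (hall c hc.1 hc.2).other hv hc.2.symm
          refine ⟨q, fun _ _ m hm hmv hcm => ?_⟩
          rcases (nc m hm).1 hcm with hh | hh
          · exact absurd hh hmv
          · exact hh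
        · exact ⟨c, fun a b => absurd ⟨a, b⟩ hc⟩
      choose f hf using oth
      refine h.R1 hv h5 hall ((((W.filter (fun u => G.Adj v u)).erase c1).erase c2).image f)
        (Finset.card_image_le.trans k2.le) ?_
      intro n hn hvn m hm hmv hnm
      by_cases e1 : n = c1
      · subst e1; right; exact second n hn hvn r1 m hm hmv hnm
      by_cases e2 : n = c2
      · subst e2; right; exact second n hn hvn r2 m hm hmv hnm
      left
      rw [hf n hn hvn m hm hmv hnm]
      apply Finset.mem_image_of_mem
      simp [e1, e2, hn, hvn]
  · push Not at hall
    obtain ⟨n, hn, hvn, hnU⟩ := hall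
    have := recv_sum_nonU2 hn hvn hnU
    rw [h4] at this
    linarith

/-- weight five, three neighbours -/
lemma MC.bound5_3 {G : SimpleGraph V} {w : V → ℤ} {W : Finset V} (h : MC G w W) {v : V}
    (hv : v ∈ W) (h5 : w v = 5) (h3 : nb G W v = 3) :
    ∑ c ∈ W.filter (fun u => G.Adj v u), recv G w W v c ≤ 6 := by
  have hvU : ¬ U2 G w W v := by
    intro hh; have := hh.2.2; omega
  have k1 : (W.filter (fun u => G.Adj v u)).card = 3 :=
    nb_card (k := 3) (by exact_mod_cast h3)
  by_cases hN : Needy G w W v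
  · have : ∀ c ∈ W.filter (fun u => G.Adj v u), recv G w W v c ≤ 2 := by
      intro e he
      simp only [Finset.mem_filter] at he
      obtain ⟨c1, c2, u, w1, w2, hc1, hc2, hu, hw1, hw2, u1, u2, u3, d12, d1, d2, hw1v, hw2v, huv,
        h12, h1u, h2u, k1, k2, k3, nv, n1, n2, ne⟩ := hN.struct h he.1 he.2
      rw [recv_eq hvU u3 hu huv ne, if_neg k3]
      have : ¬ Needy G w W u := by
        intro hNu
        exact h.no_needy (v := u) (u := v) (e := e) (c := c1) hNu hv h5 h3 he.1
          ((ne u hu).2 (by simp)).symm he.2 huv.symm u1 d1 ((nv c1 hc1).2 (by simp))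
      rw [if_pos ⟨hN, this⟩]
    have := Finset.sum_le_card_nsmul _ _ _ this
    rw [k1] at this
    simpa using this
  · have hall : ¬ ∀ n ∈ W, G.Adj v n → U2 G w W n := fun hh => hN ⟨hv, h5, h3, hh⟩
    push Not at hall
    obtain ⟨y, hy, hvy, hyU⟩ := hall
    obtain ⟨a, ha, c, hc, hac, hay, hcy, nv⟩ := three_nbrs h3 hy hvy
    have hsum : ∑ c ∈ W.filter (fun u => G.Adj v u), recv G w W v c
        = recv G w W v a + recv G w W v c := by
      have : W.filter (fun u => G.Adj v u) = {a, c, y} := by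
        ext t
        simp only [Finset.mem_filter, Finset.mem_insert, Finset.mem_singleton]
        constructor
        · rintro ⟨ht, hvt⟩; exact (nv t ht).1 hvt
        · rintro (rfl | rfl | rfl)
          · exact ⟨ha, (nv _ ha).2 (by simp)⟩
          · exact ⟨hc, (nv _ hc).2 (by simp)⟩
          · exact ⟨hy, hvy⟩
      rw [this, Finset.sum_insert (by simp [hac, hay]), Finset.sum_insert (by simp [hcy]),
        Finset.sum_singleton, recv_not hyU]
      ring
    rw [hsum]
    have ava := (nv a ha).2 (by simp)
    have avc := (nv c hc).2 (by simp)
    have la := recv_le (G := G) (w := w) (W := W) v a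
    have lc := recv_le (G := G) (w := w) (W := W) v c
    by_cases aU : U2 G w W a
    · by_cases cU : U2 G w W c
      · have main : ∀ a c : V, a ∈ W → c ∈ W → a ≠ c → a ≠ y → c ≠ y → U2 G w W a → U2 G w W c →
            G.Adj v a → G.Adj v c → (∀ u ∈ W, (G.Adj v u ↔ u = a ∨ u = c ∨ u = y)) →
            recv G w W v a ≤ 3 := by
          intro a c ha hc hac hay hcy aU cU ava avc nv
          obtain ⟨b, hb, hbv, na⟩ := aU.other hv ava.symm
          obtain ⟨x, hx, hxv, nc⟩ := cU.other hv avc.symm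
          rw [recv_eq hvU aU hb hbv na]
          have hbU : ¬ U2 G w W b := by
            intro hbU
            obtain ⟨z, hz, hza, nb'⟩ := hbU.other ha ((na b hb).2 (by simp)).symm
            exact h.R2 (v := v) (a := a) (b := b) (c := c) (y := y) (z := z) (x := x)
              hv ha hb hc hy hz hx h5 aU.2.1 hbU.2.1 cU.2.1 hac hay hcy hbv hza hxv nv na nb' nc
          have hbN : ¬ Needy G w W b := by
            intro hNb
            exact h.no_needy (v := b) (u := v) (e := a) (c := c) hNb hv h5 h3 ha
              ((na b hb).2 (by simp)).symm ava hbv.symm cU hac.symm avc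
          rw [if_neg hbU, if_neg (fun hh => hN hh.1), if_neg (fun hh => hbN hh.2)]
        have r1 := main a c ha hc hac hay hcy aU cU ava avc nv
        have r2 := main c a hc ha hac.symm hcy hay cU aU avc ava
          (by intro t ht; rw [nv t ht]; tauto)
        linarith
      · rw [recv_not cU]; linarith
    · rw [recv_not aU]; linarith

lemma MC.bound {G : SimpleGraph V} {w : V → ℤ} {W : Finset V} (h : MC G w W) {v : V}
    (hv : v ∈ W) (hvU : ¬ U2 G w W v) :
    6 * (w v - 2 * nb G W v) + ∑ c ∈ W.filter (fun u => G.Adj v u), recv G w W v c ≤ 0 := by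
  have h2 := h.two_le hv
  have hs := recv_sum (G := G) (w := w) (W := W) v
  have h5 := h.adm.1 v
  by_cases c2 : w v ≤ 2
  · linarith
  by_cases c4 : w v ≤ 4
  · exact h.bound34 hv (by omega) c4
  have w5 : w v = 5 := by omega
  by_cases n5 : 5 ≤ nb G W v
  · linarith
  have n2 : nb G W v ≠ 2 := fun hh => hvU ⟨hv, w5, hh⟩
  by_cases n4 : nb G W v = 4
  · have := h.bound5_4 hv w5 n4
    rw [n4, w5]; linarith
  have n3 : nb G W v = 3 := by omega
  have := h.bound5_3 hv w5 n3
  rw [n3, w5]; linarith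

lemma MC.false {G : SimpleGraph V} {w : V → ℤ} {W : Finset V} (h : MC G w W) : False := by
  have hne : W.Nonempty := by
    have := h.card_two
    exact Finset.card_pos.1 (by omega)
  have hp := h.adm.2 W (Finset.Subset.refl _) hne
  -- the charge received by a vertex
  have swap : ∑ v ∈ W, ∑ c ∈ W.filter (fun u => G.Adj v u), recv G w W v c
      = ∑ c ∈ W, if U2 G w W c then (6 : ℤ) else 0 := by
    have e1 : ∀ v ∈ W, ∑ c ∈ W.filter (fun u => G.Adj v u), recv G w W v c
        = ∑ c ∈ W, if G.Adj v c then recv G w W v c else 0 := by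
      intro v _
      rw [Finset.sum_filter]
    rw [Finset.sum_congr rfl e1, Finset.sum_comm]
    refine Finset.sum_congr rfl fun c hc => ?_
    by_cases hU : U2 G w W c
    · rw [if_pos hU, ← h.give_sum hU, Finset.sum_filter]
      refine Finset.sum_congr rfl fun v _ => ?_
      rw [G.adj_comm]
      unfold recv
      rw [if_pos hU]
    · rw [if_neg hU]
      apply Finset.sum_eq_zero
      intro v _
      rw [recv_not hU]
      simp
  have hle : ∑ v ∈ W, (6 * (w v - 2 * nb G W v)
      + ∑ c ∈ W.filter (fun u => G.Adj v u), recv G w W v c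
      - if U2 G w W v then (6 : ℤ) else 0) ≤ 0 := by
    apply Finset.sum_nonpos
    intro v hv
    by_cases hU : U2 G w W v
    · have : ∑ c ∈ W.filter (fun u => G.Adj v u), recv G w W v c = 0 := by
        apply Finset.sum_eq_zero
        intro c _
        unfold recv give
        simp [hU]
      rw [this, if_pos hU, hU.2.1, hU.2.2]
      norm_num
    · rw [if_neg hU]
      have := h.bound hv hU
      linarith
  rw [Finset.sum_sub_distrib, Finset.sum_add_distrib, swap, ← Finset.mul_sum] at hle
  unfold pot at hp
  linarith

theorem exists_col (n : ℕ) : ∀ (G : SimpleGraph V) (w : V → ℤ) (W : Finset V), W.card = n →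
    Adm G w W → ∃ I, Col G w W I := by
  induction n using Nat.strong_induction_on with
  | _ n ih =>
    intro G w W hW hA
    by_contra hcon
    push Not at hcon
    exact MC.false ⟨hA, hcon, fun G' w' W' hlt hA' => ih _ (hW ▸ hlt) G' w' W' rfl hA'⟩

lemma sum_nb [Fintype V] (G : SimpleGraph V) (T : Finset V) :
    ∑ v ∈ T, nb G T v
      = 2 * (Nat.card ((⊤ : G.Subgraph).induce (T : Set V)).edgeSet : ℤ) := by
  set H := (⊤ : G.Subgraph).induce (T : Set V) with hH
  have h1 := H.spanningCoe.sum_degrees_eq_twice_card_edges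
  have h2 : Nat.card H.edgeSet = H.spanningCoe.edgeFinset.card := by
    rw [← SimpleGraph.Subgraph.edgeSet_spanningCoe, Nat.card_eq_fintype_card,
      SimpleGraph.edgeFinset_card]
  rw [h2]
  have h3 : ∀ v, (H.spanningCoe.degree v : ℤ) = if v ∈ T then nb G T v else 0 := by
    intro v
    rw [← SimpleGraph.card_neighborFinset_eq_degree]
    split_ifs with hv
    · unfold nb
      congr 2
      ext u
      simp [hH, hv]
    · have : H.spanningCoe.neighborFinset v = ∅ := by
        ext u
        simp [hH, hv]
      rw [this]; simp
  have h4 : ∑ v, (H.spanningCoe.degree v : ℤ) = ∑ v ∈ T, nb G T v := by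
    rw [Finset.sum_congr rfl (fun v _ => h3 v), Finset.sum_ite_mem]
    simp
  rw [← h4]
  exact_mod_cast h1

lemma Forest.acyclic [Fintype V] {G : SimpleGraph V} {B : Finset V} (h : Forest G B) :
    (G.induce (B : Set V)).IsAcyclic := by
  intro x p hp
  have hq := hp.map (f := (SimpleGraph.Embedding.induce (G := G) (B : Set V)).toHom)
    (SimpleGraph.Embedding.induce (G := G) (B : Set V)).injective
  set q := p.map (SimpleGraph.Embedding.induce (G := G) (B : Set V)).toHom with hqd
  have hsub : q.support.toFinset ⊆ B := by
    intro t ht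
    rw [List.mem_toFinset, hqd, SimpleGraph.Walk.support_map, List.mem_map] at ht
    obtain ⟨s, -, rfl⟩ := ht
    exact s.2
  have hne : q.support.toFinset.Nonempty := by
    exact ⟨_, List.mem_toFinset.2 q.start_mem_support⟩
  have h1 := h _ hsub hne
  have h2 : pot G (fun _ => 4) q.support.toFinset ≤ 0 := by
    unfold pot
    apply Finset.sum_nonpos
    intro v hv
    have hv' : v ∈ q.support := List.mem_toFinset.1 hv
    have h3 := hq.ncard_neighborSet_toSubgraph_eq_two hv'
    have h4 : q.toSubgraph.neighborSet v
        ⊆ ((q.support.toFinset.filter (fun u => G.Adj v u) : Finset V) : Set V) := by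
      intro u hu
      have hu' : q.toSubgraph.Adj v u := hu
      simp only [Finset.coe_filter, List.mem_toFinset, Set.mem_setOf_eq]
      exact ⟨q.mem_verts_toSubgraph.1 hu'.snd_mem, hu'.adj_sub⟩
    have h5 := Set.ncard_le_ncard h4 (Finset.finite_toSet _)
    rw [h3, Set.ncard_coe_finset] at h5
    unfold nb
    have : (2 : ℤ) ≤ ((q.support.toFinset.filter (fun u => G.Adj v u)).card : ℤ) := by
      exact_mod_cast h5
    linarith
  linarith

theorem final [Fintype V] (G : SimpleGraph V)
    (h : ∀ H : G.Subgraph, H.verts.Nonempty →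
      (2 * (Nat.card H.edgeSet : ℚ)) / (H.verts.ncard : ℚ) < 5 / 2) :
    ∃ A B : Set V, A ∪ B = Set.univ ∧ Disjoint A B ∧
      (∀ u ∈ A, ∀ v ∈ A, u ≠ v → ¬ G.Adj u v ∧ ∀ w, ¬ (G.Adj u w ∧ G.Adj w v)) ∧
      (G.induce B).IsAcyclic := by
  have hA : Adm G (fun _ => 5) (Finset.univ : Finset V) := by
    refine ⟨fun _ => le_rfl, ?_⟩
    intro T _ hT
    have h1 := h ((⊤ : G.Subgraph).induce (T : Set V)) (by simpa using hT)
    have hc : (0 : ℚ) < (T.card : ℚ) := by exact_mod_cast hT.card_pos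
    have hv : ((⊤ : G.Subgraph).induce (T : Set V)).verts.ncard = T.card := by
      simp
    rw [hv, div_lt_div_iff₀ hc (by norm_num)] at h1
    have h2 : (2 * (Nat.card ((⊤ : G.Subgraph).induce (T : Set V)).edgeSet : ℤ)) * 2
        < 5 * (T.card : ℤ) := by exact_mod_cast h1
    rw [← sum_nb] at h2
    unfold pot
    rw [Finset.sum_sub_distrib, ← Finset.mul_sum, Finset.sum_const, nsmul_eq_mul]
    linarith
  obtain ⟨I, hI⟩ := exists_col _ G _ _ rfl hA
  refine ⟨(I : Set V), ((Finset.univ \ I : Finset V) : Set V), ?_, ?_, ?_, hI.forest.acyclic⟩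
  · ext t; simp
  · rw [Finset.disjoint_coe]; exact Finset.disjoint_sdiff
  · intro u hu v hv huv
    refine ⟨hI.ind u hu v hv, ?_⟩
    rintro x ⟨h1, h2⟩
    exact huv (hI.dist x (Finset.mem_univ _) u hu v hv h1.symm h2)


end IFP

/-- If `G` is a finite simple graph with maximum average degree less than `5/2`,
then `G` has an I,F-partition. -/
theorem ifPartition_of_mad_lt {V : Type*} [Fintype V] (G : SimpleGraph V)
    (h : MadLt G (5 / 2)) : ∃ A B : Set V, IsIFPartition G A B := by
  exact IFP.final G h
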